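/- arXiv:2507.19235 — 4 statements merged into one kernel-verified Lean document; each statement's English description precedes it below -/
import Mathlib

section
/- Let G=(V,p,μ) be a weighted graph with bounded geometry with constant α>0 satisfying CD(0,n) for some positive integer n. Then there exists a constant C_DV>0, depending only on n and α, such that μ(B(x,2r)) ≤ C_DV · μ(B(x,r)) for all x∈V and all r>0. -/
/-- A weighted graph `G = (V, p, μ)`: a nonnegative kernel `p` and a positive
measure `μ` on the vertex set `V`, such that `G` is locally finite, `p` is a
Markov kernel, and `G` is connected.  Vertices `x, y` are neighbours (`x ∼ y`)
iff `0 < p x y`. -/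
structure WeightedGraph (V : Type*) where
  p : V → V → ℝ
  μ : V → ℝ
  p_nonneg : ∀ x y, 0 ≤ p x y
  μ_pos : ∀ x, 0 < μ x
  locallyFinite : ∀ x, {y | 0 < p x y}.Finite
  markov : ∀ x, HasSum (p x) 1
  connected : ∀ x y : V, ∃ n : ℕ, ∃ c : Fin (n + 1) → V,
      c 0 = x ∧ c (Fin.last n) = y ∧ ∀ i : Fin n, 0 < p (c i.castSucc) (c i.succ)

namespace WeightedGraph

variable {V : Type*} (G : WeightedGraph V)

/-- The Laplacian `Δ f (x) = ∑_{y ∼ x} p x y * (f y - f x)`.  (Summing over all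
of `V` is the same, since `p x y = 0` unless `y ∼ x`.) -/
noncomputable def lap (f : V → ℝ) (x : V) : ℝ := ∑' y, G.p x y * (f y - f x)

/-- The carré du champ `Γ f (x) = (1/2) ∑_{y ∼ x} p x y * (f y - f x)^2`. -/
noncomputable def gamma (f : V → ℝ) (x : V) : ℝ := (1 / 2) * ∑' y, G.p x y * (f y - f x) ^ 2

/-- The bilinear carré du champ
`Γ(f,g)(x) = (1/2) ∑_{y ∼ x} p x y * (f y - f x) * (g y - g x)`. -/
noncomputable def gammaBil (f g : V → ℝ) (x : V) : ℝ :=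
  (1 / 2) * ∑' y, G.p x y * (f y - f x) * (g y - g x)

/-- The iterated carré du champ `Γ₂ f = (1/2) Δ (Γ f) - Γ(f, Δ f)`. -/
noncomputable def gamma2 (f : V → ℝ) (x : V) : ℝ :=
  (1 / 2) * G.lap (G.gamma f) x - G.gammaBil f (G.lap f) x

/-- Bounded geometry with constant `α > 0`: the uniform ellipticity condition (A1)
`p x y ≥ α` whenever `x ∼ y`, and the reversibility condition (A2)
`p x y * μ x = p y x * μ y`. -/
def BoundedGeometry (α : ℝ) : Prop :=
  0 < α ∧ (∀ x y, 0 < G.p x y → α ≤ G.p x y) ∧ ∀ x y, G.p x y * G.μ x = G.p y x * G.μ y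

/-- The Bakry–Émery curvature-dimension condition `CD(K, n)`:
`Γ₂ f ≥ (1/n) (Δ f)² + K Γ f`. -/
def CD (K : ℝ) (n : ℕ) : Prop :=
  ∀ f : V → ℝ, ∀ x : V, (1 / (n : ℝ)) * G.lap f x ^ 2 + K * G.gamma f x ≤ G.gamma2 f x

/-- The Bakry–Émery curvature-dimension condition `CD(K, ∞)`: `Γ₂ f ≥ K Γ f`. -/
def CDInfty (K : ℝ) : Prop :=
  ∀ f : V → ℝ, ∀ x : V, K * G.gamma f x ≤ G.gamma2 f x

/-- The graph distance `d(x,y)`: the least length of a path of consecutive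
neighbours joining `x` to `y` (and `0` if `x = y`). -/
noncomputable def dist (x y : V) : ℕ :=
  sInf {n : ℕ | ∃ c : Fin (n + 1) → V,
    c 0 = x ∧ c (Fin.last n) = y ∧ ∀ i : Fin n, 0 < G.p (c i.castSucc) (c i.succ)}

/-- The measure `μ(B(x,r)) = ∑_{y : d(x,y) ≤ r} μ y` of the closed ball `B(x,r)`. -/
noncomputable def ballMeasure (x : V) (r : ℝ) : ℝ :=
  ∑' y : {y : V // (G.dist x y : ℝ) ≤ r}, G.μ y

end WeightedGraph

/-- The sup norm `‖f‖_∞ = sup_x |f x|` of a (bounded) function on `V`. -/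
noncomputable def supNorm {V : Type*} (f : V → ℝ) : ℝ := ⨆ x, |f x|

namespace WeightedGraph

section Aux

variable {V : Type*} (G : WeightedGraph V)

/-- The finite set of neighbours. -/
noncomputable def nb (x : V) : Finset V := (G.locallyFinite x).toFinset

lemma mem_nb {x y : V} : y ∈ G.nb x ↔ 0 < G.p x y := by simp [nb]

lemma p_zero {x y : V} (h : y ∉ G.nb x) : G.p x y = 0 := by
  rw [mem_nb] at h
  exact le_antisymm (not_lt.mp h) (G.p_nonneg x y)

lemma sum_p (x : V) : ∑ y ∈ G.nb x, G.p x y = 1 := by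
  rw [← (G.markov x).tsum_eq]
  exact (tsum_eq_sum (fun y hy => G.p_zero hy)).symm

lemma lap_eq (f : V → ℝ) (x : V) : G.lap f x = ∑ y ∈ G.nb x, G.p x y * (f y - f x) := by
  unfold lap
  exact tsum_eq_sum (fun y hy => by rw [G.p_zero hy, zero_mul])

lemma gamma_eq (f : V → ℝ) (x : V) :
    G.gamma f x = (1 / 2) * ∑ y ∈ G.nb x, G.p x y * (f y - f x) ^ 2 := by
  unfold gamma
  rw [tsum_eq_sum (fun y hy => by rw [G.p_zero hy, zero_mul])]

lemma gammaBil_eq (f g : V → ℝ) (x : V) :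
    G.gammaBil f g x = (1 / 2) * ∑ y ∈ G.nb x, G.p x y * (f y - f x) * (g y - g x) := by
  unfold gammaBil
  rw [tsum_eq_sum (fun y hy => by rw [G.p_zero hy, zero_mul, zero_mul])]

lemma sum_p_le {x : V} {g : V → ℝ} {c : ℝ} (h : ∀ y, 0 < G.p x y → g y ≤ c) :
    ∑ y ∈ G.nb x, G.p x y * g y ≤ c := by
  calc _ ≤ ∑ y ∈ G.nb x, G.p x y * c :=
        Finset.sum_le_sum fun y hy => mul_le_mul_of_nonneg_left (h y (G.mem_nb.mp hy))
          (G.p_nonneg x y)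
    _ = c := by rw [← Finset.sum_mul, G.sum_p, one_mul]

lemma le_sum_p {x : V} {g : V → ℝ} {c : ℝ} (h : ∀ y, 0 < G.p x y → c ≤ g y) :
    c ≤ ∑ y ∈ G.nb x, G.p x y * g y := by
  calc c = ∑ y ∈ G.nb x, G.p x y * c := by rw [← Finset.sum_mul, G.sum_p, one_mul]
    _ ≤ _ := Finset.sum_le_sum fun y hy => mul_le_mul_of_nonneg_left (h y (G.mem_nb.mp hy))
          (G.p_nonneg x y)

/-- Gradient bound. -/
def Grad (u : V → ℝ) (c : ℝ) : Prop := ∀ x y, 0 < G.p x y → |u y - u x| ≤ c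

variable {G}

lemma Grad.lap_le {u : V → ℝ} {c : ℝ} (h : G.Grad u c) (x : V) : G.lap u x ≤ c := by
  rw [lap_eq]
  exact G.sum_p_le (g := fun y => u y - u x) fun y hy => (abs_le.mp (h x y hy)).2

lemma Grad.le_lap {u : V → ℝ} {c : ℝ} (h : G.Grad u c) (x : V) : -c ≤ G.lap u x := by
  rw [lap_eq]
  exact G.le_sum_p (g := fun y => u y - u x) fun y hy => (abs_le.mp (h x y hy)).1

lemma gamma_nonneg (u : V → ℝ) (x : V) : 0 ≤ G.gamma u x := by
  rw [gamma_eq]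
  have := Finset.sum_nonneg (s := G.nb x) (f := fun y => G.p x y * (u y - u x) ^ 2)
    fun y _ => mul_nonneg (G.p_nonneg x y) (sq_nonneg _)
  linarith

lemma gamma_le_of {u : V → ℝ} {c : ℝ} {x : V} (h : ∀ y, 0 < G.p x y → |u y - u x| ≤ c) :
    G.gamma u x ≤ c ^ 2 / 2 := by
  rw [gamma_eq]
  have := G.sum_p_le (x := x) (g := fun y => (u y - u x) ^ 2) (c := c ^ 2) fun y hy => by
    have h1 := h y hy
    rw [← sq_abs]
    exact pow_le_pow_left₀ (abs_nonneg _) h1 2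
  linarith

lemma le_gamma (u : V → ℝ) (x y : V) : G.p x y * (u y - u x) ^ 2 / 2 ≤ G.gamma u x := by
  by_cases hy : y ∈ G.nb x
  · rw [gamma_eq]
    have := Finset.single_le_sum (s := G.nb x) (f := fun y => G.p x y * (u y - u x) ^ 2)
      (fun y _ => mul_nonneg (G.p_nonneg x y) (sq_nonneg _)) hy
    linarith
  · rw [G.p_zero hy]
    simpa using gamma_nonneg u x

lemma lap_sq_le (u : V → ℝ) (x : V) : G.lap u x ^ 2 ≤ 2 * G.gamma u x := by
  have h0 : 0 ≤ ∑ y ∈ G.nb x, G.p x y * (u y - u x - G.lap u x) ^ 2 :=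
    Finset.sum_nonneg fun y _ => mul_nonneg (G.p_nonneg x y) (sq_nonneg _)
  have h1 : ∑ y ∈ G.nb x, G.p x y * (u y - u x - G.lap u x) ^ 2
      = (∑ y ∈ G.nb x, G.p x y * (u y - u x) ^ 2)
        - 2 * G.lap u x * (∑ y ∈ G.nb x, G.p x y * (u y - u x))
        + G.lap u x ^ 2 * ∑ y ∈ G.nb x, G.p x y := by
    rw [Finset.mul_sum, Finset.mul_sum, ← Finset.sum_sub_distrib, ← Finset.sum_add_distrib]
    exact Finset.sum_congr rfl fun y _ => by ring
  rw [G.sum_p, ← lap_eq] at h1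
  have h2 := G.gamma_eq u x
  nlinarith

variable (G)

/-- One explicit Euler step of the flow `∂ₜ u = Δ u + Γ u`. -/
noncomputable def stp (τ : ℝ) (u : V → ℝ) : V → ℝ :=
  fun x => u x + τ * (G.lap u x + G.gamma u x)

/-- The transition operator `1 + τ L`, `L = Δ + 2 Γ(u, ·)`. -/
noncomputable def S (τ : ℝ) (u g : V → ℝ) (x : V) : ℝ :=
  g x + τ * (G.lap g x + 2 * G.gammaBil u g x)

lemma S_eq (τ : ℝ) (u g : V → ℝ) (x : V) :
    G.S τ u g x = g x + τ * ∑ y ∈ G.nb x, G.p x y * (1 + (u y - u x)) * (g y - g x) := by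
  unfold S
  rw [lap_eq, gammaBil_eq]
  have : ∑ y ∈ G.nb x, G.p x y * (1 + (u y - u x)) * (g y - g x)
      = (∑ y ∈ G.nb x, G.p x y * (g y - g x))
        + ∑ y ∈ G.nb x, G.p x y * (u y - u x) * (g y - g x) := by
    rw [← Finset.sum_add_distrib]
    exact Finset.sum_congr rfl fun y _ => by ring
  rw [this]; ring

lemma S_eq' (τ : ℝ) (u g : V → ℝ) (x : V) :
    G.S τ u g x = (1 - τ * (1 + G.lap u x)) * g x
      + τ * ∑ y ∈ G.nb x, G.p x y * (1 + (u y - u x)) * g y := by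
  rw [S_eq]
  have : ∑ y ∈ G.nb x, G.p x y * (1 + (u y - u x)) * (g y - g x)
      = (∑ y ∈ G.nb x, G.p x y * (1 + (u y - u x)) * g y)
        - g x * ((∑ y ∈ G.nb x, G.p x y) + ∑ y ∈ G.nb x, G.p x y * (u y - u x)) := by
    rw [← Finset.sum_add_distrib, Finset.mul_sum, ← Finset.sum_sub_distrib]
    exact Finset.sum_congr rfl fun y _ => by ring
  rw [this, G.sum_p, ← lap_eq]; ring

lemma S_const (τ : ℝ) (u : V → ℝ) (c : ℝ) (x : V) : G.S τ u (fun _ => c) x = c := by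
  rw [S_eq]; simp

lemma S_add (τ : ℝ) (u f g : V → ℝ) (x : V) :
    G.S τ u (fun y => f y + g y) x = G.S τ u f x + G.S τ u g x := by
  simp only [S_eq']
  simp only [mul_add, Finset.sum_add_distrib]; ring

lemma S_smul (τ : ℝ) (u f : V → ℝ) (c : ℝ) (x : V) :
    G.S τ u (fun y => c * f y) x = c * G.S τ u f x := by
  simp only [S_eq']
  have : ∑ y ∈ G.nb x, G.p x y * (1 + (u y - u x)) * (c * f y)
     = c * ∑ y ∈ G.nb x, G.p x y * (1 + (u y - u x)) * f y := by
    rw [Finset.mul_sum]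
    exact Finset.sum_congr rfl fun y _ => by ring
  rw [this]; ring

variable {G}

lemma S_ge {τ : ℝ} (hτ : 0 ≤ τ) {u g : V → ℝ} (hu : G.Grad u (1 / 2))
    (hg : ∀ y, 0 ≤ g y) (x : V) : (1 - 2 * τ) * g x ≤ G.S τ u g x := by
  rw [S_eq']
  have h1 : 0 ≤ ∑ y ∈ G.nb x, G.p x y * (1 + (u y - u x)) * g y :=
    Finset.sum_nonneg fun y hy => mul_nonneg (mul_nonneg (G.p_nonneg x y) (by
      have := (abs_le.mp (hu x y (G.mem_nb.mp hy))).1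
      linarith)) (hg y)
  have h2 := mul_nonneg hτ h1
  have h3 := hu.lap_le x
  have h4 : 0 ≤ τ * g x * (1 - G.lap u x) := mul_nonneg (mul_nonneg hτ (hg x)) (by linarith)
  nlinarith

lemma S_nonneg {τ : ℝ} (hτ : 0 ≤ τ) (hτ' : τ ≤ 1 / 4) {u g : V → ℝ} (hu : G.Grad u (1 / 2))
    (hg : ∀ y, 0 ≤ g y) (x : V) : 0 ≤ G.S τ u g x :=
  le_trans (mul_nonneg (by linarith) (hg x)) (S_ge hτ hu hg x)

lemma S_mono {τ : ℝ} (hτ : 0 ≤ τ) (hτ' : τ ≤ 1 / 4) {u f g : V → ℝ} (hu : G.Grad u (1 / 2))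
    (hg : ∀ y, f y ≤ g y) (x : V) : G.S τ u f x ≤ G.S τ u g x := by
  have h := S_nonneg hτ hτ' hu (g := fun y => g y + (-1) * f y)
    (fun y => by have := hg y; linarith) x
  rw [S_add, S_smul] at h
  linarith

lemma S_le {τ : ℝ} (hτ : 0 ≤ τ) (hτ' : τ ≤ 1 / 4) {u f : V → ℝ} (hu : G.Grad u (1 / 2))
    {c : ℝ} (hg : ∀ y, f y ≤ c) (x : V) : G.S τ u f x ≤ c := by
  have h := S_mono hτ hτ' hu (g := fun _ => c) hg x
  rwa [S_const] at h

lemma S_sq {τ : ℝ} (hτ : 0 ≤ τ) (hτ' : τ ≤ 1 / 4) {u f : V → ℝ} (hu : G.Grad u (1 / 2))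
    (x : V) : (G.S τ u f x) ^ 2 ≤ G.S τ u (fun y => f y ^ 2) x := by
  have h := S_nonneg hτ hτ' hu (g := fun y => (f y ^ 2 + (-2 * G.S τ u f x) * f y)
    + (G.S τ u f x) ^ 2)
    (fun y => by have := sq_nonneg (f y - G.S τ u f x); nlinarith) x
  rw [S_add, S_add, S_smul, S_const] at h
  nlinarith

lemma lap_add_smul (u w : V → ℝ) (τ : ℝ) (x : V) :
    G.lap (fun y => u y + τ * w y) x = G.lap u x + τ * G.lap w x := by
  simp only [lap_eq]
  rw [Finset.mul_sum, ← Finset.sum_add_distrib]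
  exact Finset.sum_congr rfl fun y _ => by ring

lemma gamma_add_smul (u w : V → ℝ) (τ : ℝ) (x : V) :
    G.gamma (fun y => u y + τ * w y) x
      = G.gamma u x + 2 * τ * G.gammaBil u w x + τ ^ 2 * G.gamma w x := by
  simp only [gamma_eq, gammaBil_eq, Finset.mul_sum]
  rw [← Finset.sum_add_distrib, ← Finset.sum_add_distrib]
  exact Finset.sum_congr rfl fun y _ => by ring

lemma gammaBil_add (u f g : V → ℝ) (x : V) :
    G.gammaBil u (fun y => f y + g y) x = G.gammaBil u f x + G.gammaBil u g x := by
  simp only [gammaBil_eq, Finset.mul_sum]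
  rw [← Finset.sum_add_distrib]
  exact Finset.sum_congr rfl fun y _ => by ring

lemma lap_stp (τ : ℝ) (u : V → ℝ) (x : V) :
    G.lap (G.stp τ u) x = G.S τ u (G.lap u) x + 2 * τ * G.gamma2 u x := by
  unfold stp
  have h2 := lap_add_smul (G := G) (G.lap u) (G.gamma u) 1 x
  simp only [one_mul] at h2
  rw [lap_add_smul (G := G) u (fun y => G.lap u y + G.gamma u y) τ x, h2]
  unfold S gamma2
  ring

lemma gamma_stp (τ : ℝ) (u : V → ℝ) (x : V) :
    G.gamma (G.stp τ u) x = G.S τ u (G.gamma u) x - 2 * τ * G.gamma2 u x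
      + τ ^ 2 * G.gamma (fun y => G.lap u y + G.gamma u y) x := by
  unfold stp
  rw [gamma_add_smul (G := G) u (fun y => G.lap u y + G.gamma u y) τ x, gammaBil_add]
  unfold S gamma2
  ring

lemma gamma_stp_le {τ : ℝ} {u : V → ℝ} (hu : G.Grad u (1 / 2)) (x : V) :
    G.gamma (G.stp τ u) x ≤ G.S τ u (G.gamma u) x - 2 * τ * G.gamma2 u x + 2 * τ ^ 2 := by
  rw [gamma_stp]
  have hb : ∀ y, -(1/2) ≤ G.lap u y + G.gamma u y ∧ G.lap u y + G.gamma u y ≤ 1 := by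
    intro y
    have h1 := hu.lap_le y
    have h2 := hu.le_lap y
    have h3 := gamma_nonneg (G := G) u y
    have h4 := gamma_le_of (G := G) (u := u) (x := y) (hu y)
    constructor <;> linarith
  have h := gamma_le_of (G := G) (u := fun y => G.lap u y + G.gamma u y) (x := x) (c := 2)
    (fun y _ => by
      have h1 := hb y
      have h2 := hb x
      rw [abs_le]; constructor <;> linarith)
  have := mul_le_mul_of_nonneg_left h (sq_nonneg τ)
  linarith

/-- Li-Yau step. -/
lemma liyau_step {n : ℕ} (hn : 0 < n) (hCD : G.CD 0 n) {τ : ℝ} (hτ : 0 ≤ τ) (hτ' : τ ≤ 1 / 4)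
    {u : V → ℝ} (hu : G.Grad u (1 / 2)) {m : ℝ} (hm0 : 0 ≤ m) (hm1 : m ≤ 1 / 2)
    (hm : ∀ y, -m ≤ G.lap u y) (x : V) :
    -m + (2 * τ / n) * m ^ 2 ≤ G.lap (G.stp τ u) x := by
  have hn1 : (1 : ℝ) ≤ n := by exact_mod_cast hn
  rw [lap_stp]
  have h1 := hCD u x
  rw [zero_mul, add_zero] at h1
  have h2 := S_ge hτ hu (g := fun y => G.lap u y + m) (fun y => by have := hm y; linarith) x
  rw [S_add, S_const] at h2
  have h3 : 2 * τ / n * G.lap u x ^ 2 ≤ 2 * τ * G.gamma2 u x := by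
    have := mul_le_mul_of_nonneg_left h1 (by linarith : 0 ≤ 2 * τ)
    calc _ = 2 * τ * (1 / n * G.lap u x ^ 2) := by ring
      _ ≤ _ := this
  have hq : 0 ≤ 2 * τ / n := by positivity
  have hq2 : 2 * τ / n ≤ 2 * τ := div_le_self (by linarith) hn1
  generalize 2 * τ / (n : ℝ) = q at *
  have hx := hm x
  generalize G.lap u x = g at *
  have h4 : 0 ≤ q * (g + m) * (g + m) := by
    apply mul_nonneg (mul_nonneg hq _) <;> linarith
  have h5 : q * (g + m) * (2 * m) ≤ 2 * τ * (g + m) * 1 := by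
    apply mul_le_mul _ (by linarith) (by linarith) (by apply mul_nonneg <;> linarith)
    exact mul_le_mul_of_nonneg_right hq2 (by linarith)
  have h6 : 0 ≤ (1 - 4 * τ) * (g + m) := by
    apply mul_nonneg <;> linarith
  nlinarith

/-- Gradient-type step. -/
lemma F_step {n : ℕ} (hn : 0 < n) (hCD : G.CD 0 n) {τ : ℝ} (hτ : 0 ≤ τ) (hτ' : τ ≤ 1 / 4)
    {u : V → ℝ} (hu : G.Grad u (1 / 2)) {t : ℝ} (ht : 0 ≤ t) {c : ℝ}
    (hF : ∀ y, G.gamma u y + (2 * t / n) * (max 0 (-G.lap u y)) ^ 2 ≤ c) (x : V) :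
    G.gamma (G.stp τ u) x + (2 * (t + τ) / n) * (max 0 (-G.lap (G.stp τ u) x)) ^ 2
      ≤ c + 4 * τ ^ 2 := by
  have hn1 : (1 : ℝ) ≤ n := by exact_mod_cast hn
  have h1 := hCD u x
  rw [zero_mul, add_zero] at h1
  have hg2 : 0 ≤ G.gamma2 u x := le_trans (by positivity) h1
  have h3 : 2 * τ / n * G.lap u x ^ 2 ≤ 2 * τ * G.gamma2 u x := by
    have := mul_le_mul_of_nonneg_left h1 (by linarith : 0 ≤ 2 * τ)
    calc _ = 2 * τ * (1 / n * G.lap u x ^ 2) := by ring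
      _ ≤ _ := this
  have hΓ := gamma_stp_le (τ := τ) hu x
  set h : V → ℝ := fun y => max 0 (-G.lap u y) with hh
  have hh0 : ∀ y, 0 ≤ h y := fun y => le_max_left _ _
  have hhle : ∀ y, h y ^ 2 ≤ 1 / 4 := fun y => by
    have h2 : h y ≤ 1 / 2 := max_le (by norm_num) (by linarith [hu.le_lap y])
    nlinarith [hh0 y]
  have hhx : h x ^ 2 ≤ G.lap u x ^ 2 := by
    have : h x ≤ |G.lap u x| := max_le (abs_nonneg _) (neg_le_abs _)
    rw [← sq_abs (G.lap u x)]
    exact pow_le_pow_left₀ (hh0 x) this 2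
  have hS : max 0 (-G.lap (G.stp τ u) x) ≤ G.S τ u h x := by
    apply max_le (S_nonneg hτ hτ' hu hh0 x)
    rw [lap_stp]
    have h4 := S_mono hτ hτ' hu (f := fun y => (-1) * G.lap u y) (g := h)
      (fun y => by have := le_max_right 0 (-G.lap u y); simp only [hh]; linarith) x
    rw [S_smul] at h4
    have : 0 ≤ 2 * τ * G.gamma2 u x := by positivity
    linarith
  have hS2 : (max 0 (-G.lap (G.stp τ u) x)) ^ 2 ≤ G.S τ u (fun y => h y ^ 2) x :=
    le_trans (pow_le_pow_left₀ (le_max_left _ _) hS 2) (S_sq hτ hτ' hu x)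
  have hF2 := S_le hτ hτ' hu hF x
  rw [S_add, S_smul] at hF2
  -- `S (h²) ≤ h² + τ`
  have hL : G.S τ u (fun y => h y ^ 2) x ≤ h x ^ 2 + τ := by
    rw [S_eq]
    have : ∑ y ∈ G.nb x, G.p x y * (1 + (u y - u x)) * (h y ^ 2 - h x ^ 2) ≤ 1 := by
      have := G.sum_p_le (x := x) (g := fun y => (1 + (u y - u x)) * (h y ^ 2 - h x ^ 2))
        (c := 1) fun y hy => by
          have ha := abs_le.mp (hu x y hy)
          have hb := hhle y
          have hc := sq_nonneg (h x)
          have : (1 + (u y - u x)) * (h y ^ 2 - h x ^ 2) ≤ (1 + (u y - u x)) * (1 / 4) :=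
            mul_le_mul_of_nonneg_left (by linarith) (by linarith)
          linarith
      simpa only [mul_assoc] using this
    nlinarith
  have hq0 : 0 ≤ 2 * (t + τ) / n := by positivity
  have h5 := mul_le_mul_of_nonneg_left hS2 hq0
  have h6 : 2 * (t + τ) / n = 2 * t / n + 2 * τ / n := by ring
  have hq : 0 ≤ 2 * τ / n := by positivity
  have h7 := mul_le_mul_of_nonneg_left hL hq
  have h8 := mul_le_mul_of_nonneg_left hhx hq
  rw [h6] at h5 ⊢
  rw [add_mul _ _ (G.S τ u (fun y => h y ^ 2) x)] at h5
  change G.S τ u (G.gamma u) x + 2 * t / ↑n * G.S τ u (fun y => h y ^ 2) x ≤ c at hF2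
  -- the crude bound of 2 τ / n * τ needs 2τ²/n ≤ 2 τ²
  have h9 : 2 * τ / n * τ ≤ 2 * τ ^ 2 := by
    have : 2 * τ / n ≤ 2 * τ := div_le_self (by linarith) hn1
    nlinarith
  rw [mul_add] at h7
  linarith

end Aux

end WeightedGraph
namespace WeightedGraph

section Aux2

variable {V : Type*} {G : WeightedGraph V}

lemma exp_lower {s : ℝ} (hs : |s| ≤ 1 / 2) :
    2 * s + 10 / 9 * s ^ 2 ≤ Real.exp (2 * s) - 1 := by
  have h1 : |2 * s| ≤ 1 := by rw [abs_mul]; norm_num; linarith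
  have h := Real.exp_bound h1 (n := 3) (by norm_num)
  have h2 := (abs_le.mp h).1
  simp [Finset.sum_range_succ, Nat.factorial] at h2
  have h3 : (2 * |s|) ^ 3 ≤ 4 * s ^ 2 := by
    rw [← sq_abs s]
    have := abs_nonneg s
    have h5 : 0 ≤ |s| ^ 2 * (1 / 2 - |s|) := mul_nonneg (sq_nonneg _) (by linarith)
    nlinarith
  nlinarith

lemma mass_pointwise {τ : ℝ} (hτ : 0 ≤ τ) (hτ' : τ ≤ 1 / 100) {u : V → ℝ}
    (hu : G.Grad u (1 / 2)) (x : V) :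
    Real.exp (2 * G.stp τ u x) - 1 ≤ (Real.exp (2 * u x) - 1)
      + τ * G.lap (fun y => Real.exp (2 * u y) - 1) x := by
  have h1 := hu.lap_le x
  have h2 := hu.le_lap x
  have h3 := gamma_nonneg (G := G) u x
  have h4 := gamma_le_of (G := G) (u := u) (x := x) (hu x)
  have h5 := lap_sq_le (G := G) u x
  set w := G.lap u x + G.gamma u x with hw
  have hE : G.lap (fun y => Real.exp (2 * u y) - 1) x
      = Real.exp (2 * u x) * ∑ y ∈ G.nb x, G.p x y * (Real.exp (2 * (u y - u x)) - 1) := by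
    rw [lap_eq, Finset.mul_sum]
    refine Finset.sum_congr rfl fun y _ => ?_
    have : Real.exp (2 * u y) = Real.exp (2 * u x) * Real.exp (2 * (u y - u x)) := by
      rw [← Real.exp_add]; congr 1; ring
    rw [this]; ring
  have hlow : 2 * G.lap u x + 20 / 9 * G.gamma u x
      ≤ ∑ y ∈ G.nb x, G.p x y * (Real.exp (2 * (u y - u x)) - 1) := by
    calc _ = ∑ y ∈ G.nb x, G.p x y * (2 * (u y - u x) + 10 / 9 * (u y - u x) ^ 2) := by
          rw [lap_eq, gamma_eq, Finset.mul_sum, Finset.mul_sum, Finset.mul_sum,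
            ← Finset.sum_add_distrib]
          exact Finset.sum_congr rfl fun y _ => by ring
      _ ≤ _ := Finset.sum_le_sum fun y hy => mul_le_mul_of_nonneg_left
          (exp_lower (hu x y (G.mem_nb.mp hy))) (G.p_nonneg x y)
  have hup : Real.exp (2 * τ * w) - 1 - 2 * τ * w ≤ (2 * τ * w) ^ 2 := by
    refine le_trans (le_abs_self _) (Real.abs_exp_sub_one_sub_id_le ?_)
    rw [abs_le]
    have : |w| ≤ 1 := by rw [abs_le]; constructor <;> linarith
    have := abs_le.mp this
    constructor <;> nlinarith
  have hw2 : w ^ 2 ≤ 17 / 4 * G.gamma u x := by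
    nlinarith [sq_nonneg (G.lap u x - G.gamma u x)]
  have key : Real.exp (2 * τ * w) - 1
      ≤ τ * ∑ y ∈ G.nb x, G.p x y * (Real.exp (2 * (u y - u x)) - 1) := by
    have h6 := mul_le_mul_of_nonneg_left hlow hτ
    have h7 : (2 * τ * w) ^ 2 ≤ 2 / 9 * τ * G.gamma u x := by
      have h8 : (2 * τ * w) ^ 2 = 4 * τ * (τ * w ^ 2) := by ring
      have h9 : τ * w ^ 2 ≤ 1 / 100 * (17 / 4 * G.gamma u x) :=
        mul_le_mul hτ' hw2 (sq_nonneg _) (by norm_num)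
      have h10 := mul_le_mul_of_nonneg_left h9 (by linarith : 0 ≤ 4 * τ)
      have h11 : 0 ≤ τ * G.gamma u x := mul_nonneg hτ h3
      rw [h8]; linarith
    rw [hw] at *
    linarith
  rw [hE]
  have hs : Real.exp (2 * G.stp τ u x) = Real.exp (2 * u x) * Real.exp (2 * τ * w) := by
    rw [← Real.exp_add]; unfold stp; congr 1; ring
  rw [hs]
  have := mul_le_mul_of_nonneg_left key (Real.exp_pos (2 * u x)).le
  nlinarith

lemma hasSum_lap (hrev : ∀ x y, G.p x y * G.μ x = G.p y x * G.μ y) {f : V → ℝ}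
    (hf : (Function.support f).Finite) : HasSum (fun x => G.μ x * G.lap f x) 0 := by
  classical
  set A := hf.toFinset with hA
  have hA' : ∀ y, y ∉ A → f y = 0 := fun y hy => by
    by_contra h; exact hy (by simp [hA, h])
  have h1 : HasSum (fun x => ∑ y ∈ A, G.μ x * G.p x y * f y) (∑ y ∈ A, G.μ y * f y) := by
    refine hasSum_sum fun y _ => ?_
    have := ((G.markov y).mul_left (G.μ y)).mul_right (f y)
    rw [mul_one] at this
    refine (congrArg (fun F : V → ℝ => HasSum F (G.μ y * f y)) (funext fun x => ?_)).mpr this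
    have := hrev x y
    rw [mul_comm (G.μ x), this, mul_comm (G.μ y)]
  have h2 : HasSum (fun x => G.μ x * f x) (∑ y ∈ A, G.μ y * f y) :=
    hasSum_sum_of_ne_finset_zero fun y hy => by rw [hA' y hy, mul_zero]
  have h3 := h1.sub h2
  rw [sub_self] at h3
  refine (congrArg (fun F : V → ℝ => HasSum F 0) (funext fun x => ?_)).mpr h3
  have h4 : ∑ y ∈ G.nb x, G.p x y * f y = ∑ y ∈ A, G.p x y * f y := by
    rw [Finset.sum_subset (Finset.subset_union_left : G.nb x ⊆ G.nb x ∪ A)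
        (fun y _ hy => by rw [G.p_zero hy, zero_mul]),
      Finset.sum_subset (Finset.subset_union_right : A ⊆ G.nb x ∪ A)
        (fun y _ hy => by rw [hA' y hy, mul_zero])]
  rw [lap_eq]
  simp only [mul_sub, Finset.sum_sub_distrib]
  rw [← Finset.sum_mul, G.sum_p, h4, one_mul, Finset.mul_sum]
  congr 1
  exact Finset.sum_congr rfl fun y _ => by ring

lemma p_symm (hrev : ∀ x y, G.p x y * G.μ x = G.p y x * G.μ y) {x y : V} (h : 0 < G.p x y) :
    0 < G.p y x := by
  have h1 := hrev x y
  have h2 : 0 < G.p y x * G.μ y := h1 ▸ mul_pos h (G.μ_pos x)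
  exact pos_of_mul_pos_left h2 (G.μ_pos y).le

lemma stp_support (hrev : ∀ x y, G.p x y * G.μ x = G.p y x * G.μ y) {τ : ℝ} {u : V → ℝ}
    (hu : (Function.support u).Finite) : (Function.support (G.stp τ u)).Finite := by
  refine (hu.union (hu.biUnion fun y _ => G.locallyFinite y)).subset ?_
  intro x hx
  by_contra hc
  simp only [Set.mem_union, Set.mem_iUnion, not_or, not_exists, Function.mem_support, not_not,
    Set.mem_ofPred_eq] at hc
  obtain ⟨h0, h1⟩ := hc
  have h2 : ∀ y ∈ G.nb x, u y = 0 := fun y hy => by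
    by_contra h
    exact h1 y h (p_symm hrev (G.mem_nb.mp hy))
  apply hx
  unfold stp
  rw [lap_eq, gamma_eq, Finset.sum_eq_zero, Finset.sum_eq_zero, h0]
  · simp
  · intro y hy; rw [h2 y hy, h0]; simp
  · intro y hy; rw [h2 y hy, h0]; simp

lemma mass_step (hrev : ∀ x y, G.p x y * G.μ x = G.p y x * G.μ y) {τ : ℝ} (hτ : 0 ≤ τ)
    (hτ' : τ ≤ 1 / 100) {u : V → ℝ} (hu : G.Grad u (1 / 2)) (hs : (Function.support u).Finite) :
    ∑' x, G.μ x * (Real.exp (2 * G.stp τ u x) - 1) ≤ ∑' x, G.μ x * (Real.exp (2 * u x) - 1) := by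
  have hsub : ∀ v : V → ℝ, (Function.support v).Finite →
      (Function.support fun y => Real.exp (2 * v y) - 1).Finite := fun v hv =>
    hv.subset fun x hx => by
      intro h; apply hx; simp [h]
  have hsum : ∀ v : V → ℝ, (Function.support v).Finite →
      Summable fun y => G.μ y * (Real.exp (2 * v y) - 1) := fun v hv =>
    summable_of_hasFiniteSupport ((hsub v hv).subset fun x hx => by
      intro h; apply hx; simp only at h; simp [h])
  have h1 := (hsum u hs).hasSum.add ((hasSum_lap hrev (hsub u hs)).mul_left τ)
  rw [mul_zero, add_zero] at h1
  refine hasSum_le (fun x => ?_) (hsum _ (stp_support hrev (τ := τ) hs)).hasSum h1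
  have := mul_le_mul_of_nonneg_left (mass_pointwise hτ hτ' hu x) (G.μ_pos x).le
  linarith

lemma stp_nonneg {τ : ℝ} (hτ : 0 ≤ τ) (hτ' : τ ≤ 1) {u : V → ℝ} (hu : ∀ x, 0 ≤ u x) (x : V) :
    0 ≤ G.stp τ u x := by
  unfold stp
  have h1 := gamma_nonneg (G := G) u x
  have h2 : -u x ≤ G.lap u x := by
    rw [lap_eq]
    exact G.le_sum_p (g := fun y => u y - u x) fun y _ => by have := hu y; linarith
  have h3 := hu x
  have h4 := mul_nonneg hτ h1
  have h5 := mul_le_mul_of_nonneg_left h2 hτ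
  nlinarith

/-! Distances -/

/-- paths -/
def IsPath (G : WeightedGraph V) (k : ℕ) (x y : V) : Prop :=
  ∃ c : Fin (k + 1) → V, c 0 = x ∧ c (Fin.last k) = y ∧
    ∀ i : Fin k, 0 < G.p (c i.castSucc) (c i.succ)

lemma isPath_dist (x y : V) : G.IsPath (G.dist x y) x y :=
  Nat.sInf_mem (s := {n | G.IsPath n x y}) (G.connected x y)

lemma dist_le {k : ℕ} {x y : V} (h : G.IsPath k x y) : G.dist x y ≤ k :=
  Nat.sInf_le (s := {n | G.IsPath n x y}) h

lemma isPath_zero {x y : V} : G.IsPath 0 x y ↔ x = y := by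
  constructor
  · rintro ⟨c, h0, h1, -⟩
    rw [← h0, ← h1]; rfl
  · rintro rfl
    exact ⟨fun _ => x, rfl, rfl, fun i => i.elim0⟩

lemma isPath_succ {k : ℕ} {x z : V} :
    G.IsPath (k + 1) x z ↔ ∃ y, G.IsPath k x y ∧ 0 < G.p y z := by
  constructor
  · rintro ⟨c, h0, h1, h2⟩
    refine ⟨c (Fin.last k).castSucc, ⟨fun i => c i.castSucc, ?_, rfl, fun i => ?_⟩, ?_⟩
    · exact h0
    · exact h2 i.castSucc
    · rw [← h1]; exact h2 (Fin.last k)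
  · rintro ⟨y, ⟨c, h0, h1, h2⟩, hy⟩
    refine ⟨Fin.snoc c z, ?_, ?_, fun i => ?_⟩
    · rw [← h0]; exact Fin.snoc_castSucc (α := fun _ => V) z c 0
    · exact Fin.snoc_last (α := fun _ => V) z c
    · refine Fin.lastCases ?_ (fun j => ?_) i
      · rw [Fin.succ_last, Fin.snoc_last, Fin.snoc_castSucc, h1]; exact hy
      · rw [Fin.succ_castSucc, Fin.snoc_castSucc, Fin.snoc_castSucc]; exact h2 j

lemma dist_self' (x : V) : G.dist x x = 0 :=
  Nat.le_zero.mp (dist_le (isPath_zero.mpr rfl))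

lemma dist_step {x y z : V} (h : 0 < G.p y z) : G.dist x z ≤ G.dist x y + 1 :=
  dist_le (isPath_succ.mpr ⟨y, isPath_dist x y, h⟩)

lemma dist_pred {x z : V} {k : ℕ} (h : G.dist x z ≤ k + 1) :
    G.dist x z ≤ k ∨ ∃ y, G.dist x y ≤ k ∧ 0 < G.p y z := by
  by_cases hk : G.dist x z ≤ k
  · exact Or.inl hk
  · right
    have : G.dist x z = k + 1 := by omega
    have hp := isPath_dist (G := G) x z
    rw [this, isPath_succ] at hp
    obtain ⟨y, hy, hyz⟩ := hp
    exact ⟨y, dist_le hy, hyz⟩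

lemma ball_finite (x : V) (k : ℕ) : {y | G.dist x y ≤ k}.Finite := by
  induction k with
  | zero =>
    refine (Set.finite_singleton x).subset fun y hy => ?_
    have : G.dist x y = 0 := Nat.le_zero.mp hy
    have hp := isPath_dist (G := G) x y
    rw [this, isPath_zero] at hp
    exact hp.symm
  | succ k ih =>
    refine (ih.union (ih.biUnion fun y _ => G.locallyFinite y)).subset fun z hz => ?_
    rcases dist_pred hz with h | ⟨y, hy, hyz⟩
    · exact Or.inl h
    · right
      simp only [Set.mem_iUnion]
      exact ⟨y, hy, hyz⟩

/-- ball as a finset -/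
noncomputable def ballF (G : WeightedGraph V) (x : V) (k : ℕ) : Finset V :=
  (G.ball_finite x k).toFinset

lemma mem_ballF {x y : V} {k : ℕ} : y ∈ G.ballF x k ↔ G.dist x y ≤ k := by simp [ballF]

lemma ballMeasure_eq (x : V) {r : ℝ} (hr : 0 ≤ r) :
    G.ballMeasure x r = ∑ y ∈ G.ballF x ⌊r⌋₊, G.μ y := by
  unfold ballMeasure
  have : ∀ y, (G.dist x y : ℝ) ≤ r ↔ y ∈ G.ballF x ⌊r⌋₊ := fun y => by
    rw [mem_ballF, Nat.le_floor_iff hr]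
  rw [← Finset.tsum_subtype (G.ballF x ⌊r⌋₊) G.μ]
  exact (Equiv.subtypeEquivRight this).tsum_eq (fun y : {y // y ∈ G.ballF x ⌊r⌋₊} => G.μ y)

lemma vol_succ {α : ℝ} (hG : G.BoundedGeometry α) (x : V) (k : ℕ) :
    ∑ y ∈ G.ballF x (k + 1), G.μ y ≤ (1 + 1 / α) * ∑ y ∈ G.ballF x k, G.μ y := by
  classical
  obtain ⟨hα, hell, hrev⟩ := hG
  have hsub : G.ballF x (k + 1) ⊆ G.ballF x k ∪ (G.ballF x k).biUnion G.nb := by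
    intro z hz
    rw [mem_ballF] at hz
    rw [Finset.mem_union, Finset.mem_biUnion, mem_ballF]
    rcases dist_pred hz with h | ⟨y, hy, hyz⟩
    · exact Or.inl h
    · exact Or.inr ⟨y, mem_ballF.mpr hy, G.mem_nb.mpr hyz⟩
  have hnn : ∀ y, 0 ≤ G.μ y := fun y => (G.μ_pos y).le
  have hnb : ∀ z, ∑ y ∈ G.nb z, G.μ y ≤ 1 / α * G.μ z := fun z => by
    calc ∑ y ∈ G.nb z, G.μ y ≤ ∑ y ∈ G.nb z, 1 / α * (G.p z y * G.μ z) := by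
          refine Finset.sum_le_sum fun y hy => ?_
          rw [hrev z y]
          have h1 := hell y z (p_symm hrev (G.mem_nb.mp hy))
          rw [div_mul_eq_mul_div, one_mul, le_div_iff₀ hα, mul_comm]
          exact mul_le_mul_of_nonneg_right h1 (hnn y)
      _ = 1 / α * G.μ z := by
          rw [← Finset.mul_sum, ← Finset.sum_mul, G.sum_p, one_mul]
  calc _ ≤ ∑ y ∈ G.ballF x k ∪ (G.ballF x k).biUnion G.nb, G.μ y :=
        Finset.sum_le_sum_of_subset_of_nonneg hsub fun y _ _ => hnn y
    _ ≤ ∑ y ∈ G.ballF x k, G.μ y + ∑ y ∈ (G.ballF x k).biUnion G.nb, G.μ y := by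
        rw [← Finset.sum_union_inter]
        have : 0 ≤ ∑ y ∈ G.ballF x k ∩ (G.ballF x k).biUnion G.nb, G.μ y :=
          Finset.sum_nonneg fun y _ => hnn y
        linarith
    _ ≤ ∑ y ∈ G.ballF x k, G.μ y + ∑ z ∈ G.ballF x k, ∑ y ∈ G.nb z, G.μ y := by
        gcongr
        induction G.ballF x k using Finset.induction_on with
        | empty => simp
        | insert a s ha ih =>
          rw [Finset.biUnion_insert, Finset.sum_insert ha]
          have h1 := Finset.sum_union_inter (s₁ := G.nb a) (s₂ := s.biUnion G.nb) (f := G.μ)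
          have : 0 ≤ ∑ y ∈ G.nb a ∩ s.biUnion G.nb, G.μ y :=
            Finset.sum_nonneg fun y _ => hnn y
          linarith
    _ ≤ ∑ y ∈ G.ballF x k, G.μ y + ∑ z ∈ G.ballF x k, 1 / α * G.μ z := by
        gcongr with z _
        exact hnb z
    _ = _ := by rw [← Finset.mul_sum]; ring

lemma vol_add {α : ℝ} (hG : G.BoundedGeometry α) (x : V) (k j : ℕ) :
    ∑ y ∈ G.ballF x (k + j), G.μ y ≤ (1 + 1 / α) ^ j * ∑ y ∈ G.ballF x k, G.μ y := by
  have hα := hG.1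
  induction j with
  | zero => simp
  | succ j ih =>
    refine le_trans (vol_succ hG x (k + j)) ?_
    rw [pow_succ, mul_comm ((1 + 1 / α) ^ j), mul_assoc]
    exact mul_le_mul_of_nonneg_left ih (by positivity)

end Aux2

end WeightedGraph
namespace WeightedGraph

section Aux3

variable {V : Type*} {G : WeightedGraph V}

/-- Discrete flow. -/
noncomputable def flow (G : WeightedGraph V) (τ : ℝ) (u : V → ℝ) : ℕ → V → ℝ
  | 0 => u
  | k + 1 => G.stp τ (flow G τ u k)

lemma grad_of_gamma {α : ℝ} (hG : G.BoundedGeometry α) {u : V → ℝ}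
    (h : ∀ x, G.gamma u x ≤ α / 8) : G.Grad u (1 / 2) := by
  obtain ⟨hα, hell, -⟩ := hG
  intro x y hxy
  have h1 := le_gamma (G := G) u x y
  have h2 := mul_le_mul_of_nonneg_right (hell x y hxy) (sq_nonneg (u y - u x))
  have h3 := h x
  have h4 : (u y - u x) ^ 2 ≤ (1 / 2) ^ 2 := by
    by_contra hc
    push Not at hc
    nlinarith
  exact abs_le_of_sq_le_sq h4 (by norm_num)

/-- Invariant along the flow: the `F`-functional bound. -/
lemma flow_F {α : ℝ} (hG : G.BoundedGeometry α) {n : ℕ} (hn : 0 < n) (hCD : G.CD 0 n)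
    {τ : ℝ} (hτ : 0 ≤ τ) (hτ' : τ ≤ 1 / 4) {u : V → ℝ} {c : ℝ} (hu : ∀ x, G.gamma u x ≤ c)
    {K : ℕ} (hK : c + 4 * τ ^ 2 * K ≤ α / 8) (k : ℕ) (hk : k ≤ K) (x : V) :
    G.gamma (G.flow τ u k) x
      + (2 * (τ * k) / n) * (max 0 (-G.lap (G.flow τ u k) x)) ^ 2 ≤ c + 4 * τ ^ 2 * k := by
  induction k generalizing x with
  | zero => simpa [flow] using hu x
  | succ k ih =>
    have ih' := ih (by omega)
    have hkK : (k : ℝ) ≤ K := by exact_mod_cast (by omega : k ≤ K)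
    have hgr : G.Grad (G.flow τ u k) (1 / 2) := by
      refine grad_of_gamma hG fun y => ?_
      have h1 := ih' y
      have h2 : 0 ≤ (2 * (τ * k) / n) * (max 0 (-G.lap (G.flow τ u k) y)) ^ 2 := by positivity
      have h3 : 4 * τ ^ 2 * k ≤ 4 * τ ^ 2 * K := by gcongr
      linarith
    have h := F_step hn hCD hτ hτ' hgr (t := τ * k) (by positivity) ih' x
    push_cast
    simp only [flow]
    have e1 : τ * ((k : ℝ) + 1) = τ * k + τ := by ring
    have e2 : c + 4 * τ ^ 2 * ((k : ℝ) + 1) = c + 4 * τ ^ 2 * k + 4 * τ ^ 2 := by ring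
    rw [e1, e2]
    exact h

lemma flow_grad {α : ℝ} (hG : G.BoundedGeometry α) {n : ℕ} (hn : 0 < n) (hCD : G.CD 0 n)
    {τ : ℝ} (hτ : 0 ≤ τ) (hτ' : τ ≤ 1 / 4) {u : V → ℝ} {c : ℝ} (hu : ∀ x, G.gamma u x ≤ c)
    {K : ℕ} (hK : c + 4 * τ ^ 2 * K ≤ α / 8) (k : ℕ) (hk : k ≤ K) :
    G.Grad (G.flow τ u k) (1 / 2) := by
  refine grad_of_gamma hG fun y => ?_
  have h1 := flow_F hG hn hCD hτ hτ' hu hK k hk y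
  have hkK : (k : ℝ) ≤ K := by exact_mod_cast hk
  have h2 : 0 ≤ (2 * (τ * k) / n) * (max 0 (-G.lap (G.flow τ u k) y)) ^ 2 := by positivity
  have h3 : 4 * τ ^ 2 * k ≤ 4 * τ ^ 2 * K := by gcongr
  linarith

/-- Li-Yau inequality along the flow. -/
lemma flow_liyau {n : ℕ} (hn : 0 < n) (hCD : G.CD 0 n)
    {τ : ℝ} (hτ : 0 ≤ τ) (hτ' : τ ≤ 1 / 4) {u : V → ℝ} {K : ℕ}
    (hgr : ∀ k ≤ K, G.Grad (G.flow τ u k) (1 / 2)) (k : ℕ) (hk : k ≤ K) (x : V) :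
    -(1 / (2 + 2 * τ / n * k)) ≤ G.lap (G.flow τ u k) x := by
  have hn0 : (0 : ℝ) < n := by exact_mod_cast hn
  induction k generalizing x with
  | zero =>
    have := (hgr 0 (by omega)).le_lap x
    simpa using this
  | succ k ih =>
    have hq : 0 ≤ 2 * τ / n := by positivity
    have hA : (2 : ℝ) ≤ 2 + 2 * τ / n * k := by
      have : 0 ≤ 2 * τ / n * k := by positivity
      linarith
    have h := liyau_step hn hCD hτ hτ' (hgr k (by omega))
      (m := 1 / (2 + 2 * τ / n * k)) (by positivity)
      (one_div_le_one_div_of_le (by norm_num) hA) (ih (by omega)) x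
    refine le_trans ?_ h
    push_cast
    have e : 2 + 2 * τ / n * ((k : ℝ) + 1) = (2 + 2 * τ / n * k) + 2 * τ / n := by ring
    rw [e]
    generalize 2 + 2 * τ / n * (k : ℝ) = A at *
    generalize 2 * τ / (n : ℝ) = q at *
    have hA0 : 0 < A := by linarith
    have hAq : 0 < A + q := by linarith
    have : 1 / A - 1 / (A + q) = q / (A * (A + q)) := by field_simp; ring
    have h2 : q / (A * (A + q)) ≤ q * (1 / A) ^ 2 := by
      rw [div_le_iff₀ (by positivity)]
      have : q * (1 / A) ^ 2 * (A * (A + q)) = q + q * q / A := by field_simp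
      rw [this]
      have : 0 ≤ q * q / A := by positivity
      linarith
    linarith

/-- Lower bound of the flow at a point for short times. -/
lemma flow_short {n : ℕ} (hn : 0 < n) {τ : ℝ} (hτ : 0 < τ) {u : V → ℝ} {ε : ℝ} (hε : 0 ≤ ε)
    {K : ℕ} (h0 : ∀ x, -ε ≤ G.lap u x)
    (hF : ∀ k ≤ K, ∀ x, G.gamma (G.flow τ u k) x
      + (2 * (τ * k) / n) * (max 0 (-G.lap (G.flow τ u k) x)) ^ 2 ≤ ε ^ 2)
    (x : V) (k : ℕ) (hk : k ≤ K) :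
    u x - τ * ε - ε * √(2 * n * τ) * √k ≤ G.flow τ u (k + 1) x := by
  have hn0 : (0 : ℝ) < n := by exact_mod_cast hn
  induction k with
  | zero =>
    simp only [flow, stp]
    have h1 := h0 x
    have h2 := gamma_nonneg (G := G) u x
    simp
    nlinarith
  | succ k ih =>
    have ih' := ih (by omega)
    have h1 := hF (k + 1) hk x
    have h2 := gamma_nonneg (G := G) (G.flow τ u (k + 1)) x
    have hstep : G.flow τ u (k + 1 + 1) x = G.flow τ u (k + 1) x
      + τ * (G.lap (G.flow τ u (k + 1)) x + G.gamma (G.flow τ u (k + 1)) x) := rfl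
    rw [hstep]
    set g := G.lap (G.flow τ u (k + 1)) x
    have hm : -g ≤ max 0 (-g) := le_max_right _ _
    have hm0 : 0 ≤ max 0 (-g) := le_max_left _ _
    set m := max 0 (-g)
    set a := √((k + 1 : ℕ) : ℝ) with ha
    set b := √(k : ℝ) with hb
    set q := √(2 * n * τ) with hq
    have ha2 : a ^ 2 = k + 1 := by rw [ha, Real.sq_sqrt (by positivity)]; push_cast; ring
    have hb2 : b ^ 2 = k := by rw [hb, Real.sq_sqrt (by positivity)]
    have hq2 : q ^ 2 = 2 * n * τ := by rw [hq, Real.sq_sqrt (by positivity)]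
    have ha0 : 0 < a := by rw [ha]; exact Real.sqrt_pos.mpr (by positivity)
    have hb0 : 0 ≤ b := Real.sqrt_nonneg _
    have hq0 : 0 ≤ q := Real.sqrt_nonneg _
    -- `2 τ a² m² ≤ n ε²`, so `τ m ≤ ε q / (2a)`
    have h3 : 2 * τ * a ^ 2 * m ^ 2 ≤ n * ε ^ 2 := by
      rw [ha2]
      have h4 : 2 * (τ * ((k + 1 : ℕ) : ℝ)) / n * m ^ 2 ≤ ε ^ 2 := by linarith
      have h5 := mul_le_mul_of_nonneg_left h4 hn0.le
      have e : n * (2 * (τ * ((k + 1 : ℕ) : ℝ)) / n * m ^ 2) = 2 * τ * ((k : ℝ) + 1) * m ^ 2 := by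
        push_cast; field_simp
      linarith
    have h6 : (2 * a * (τ * m)) ^ 2 ≤ (ε * q) ^ 2 := by
      have e1 : (2 * a * (τ * m)) ^ 2 = 2 * τ * (2 * τ * a ^ 2 * m ^ 2) := by ring
      have e2 : (ε * q) ^ 2 = 2 * τ * (n * ε ^ 2) := by rw [mul_pow, hq2]; ring
      rw [e1, e2]
      exact mul_le_mul_of_nonneg_left h3 (by positivity)
    have h7 : 2 * a * (τ * m) ≤ ε * q := by
      exact abs_le_of_sq_le_sq' h6 (by positivity) |>.2
    have hab : 1 ≤ 2 * a * (a - b) := by nlinarith [sq_nonneg (a - b)]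
    have h8 : τ * m ≤ ε * q * (a - b) := by
      have h9 : ε * q * 1 ≤ ε * q * (2 * a * (a - b)) :=
        mul_le_mul_of_nonneg_left hab (by positivity)
      have h10 : 2 * a * (τ * m) ≤ 2 * a * (ε * q * (a - b)) := by linarith
      exact le_of_mul_le_mul_left h10 (by positivity)
    have h11 : 0 ≤ τ * G.gamma (G.flow τ u (k + 1)) x := by positivity
    have h12 : τ * (-g) ≤ τ * m := mul_le_mul_of_nonneg_left hm hτ.le
    linarith

/-- Harnack inequality along one edge. -/
lemma harnack_edge {α : ℝ} (hG : G.BoundedGeometry α) {τ : ℝ} (hτ : 0 < τ) {u : V → ℝ} {m : ℝ}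
    {k₀ N : ℕ} (hN : 0 < N)
    (hL : ∀ k, k₀ ≤ k → k < k₀ + N → ∀ x, -m ≤ G.lap (G.flow τ u k) x)
    {x y : V} (hxy : 0 < G.p x y) :
    G.flow τ u k₀ x - τ * m * N - 1 / (2 * α * τ * N) ≤ G.flow τ u (k₀ + N) y := by
  obtain ⟨hα, hell, hrev⟩ := hG
  have hN0 : (0 : ℝ) < N := by exact_mod_cast hN
  have key : ∀ j : ℕ, j ≤ N → G.flow τ u k₀ x - j * (τ * m + 1 / (2 * α * τ * N ^ 2))
      ≤ (1 - j / N) * G.flow τ u (k₀ + j) x + j / N * G.flow τ u (k₀ + j) y := by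
    intro j
    induction j with
    | zero => intro _; simp
    | succ j ih =>
      intro hj
      have ih' := ih (by omega)
      have hl := hL (k₀ + j) (by omega) (by omega)
      have hx : G.flow τ u (k₀ + (j + 1)) x = G.flow τ u (k₀ + j) x
        + τ * (G.lap (G.flow τ u (k₀ + j)) x + G.gamma (G.flow τ u (k₀ + j)) x) := rfl
      have hy : G.flow τ u (k₀ + (j + 1)) y = G.flow τ u (k₀ + j) y
        + τ * (G.lap (G.flow τ u (k₀ + j)) y + G.gamma (G.flow τ u (k₀ + j)) y) := rfl
      rw [hx, hy]
      set f := G.flow τ u (k₀ + j)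
      have hgx : α / 2 * (f y - f x) ^ 2 ≤ G.gamma f x := by
        have h1 := le_gamma (G := G) f x y
        have h2 := mul_le_mul_of_nonneg_right (hell x y hxy) (sq_nonneg (f y - f x))
        linarith
      have hgy : α / 2 * (f y - f x) ^ 2 ≤ G.gamma f y := by
        have h1 := le_gamma (G := G) f y x
        have h2 := mul_le_mul_of_nonneg_right (hell y x (p_symm hrev hxy))
          (sq_nonneg (f x - f y))
        have e : (f y - f x) ^ 2 = (f x - f y) ^ 2 := by ring
        rw [e]; linarith
      push_cast
      set l : ℝ := ((j : ℝ) + 1) / N with hl'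
      have hl0 : 0 ≤ l := by positivity
      have hl1 : l ≤ 1 := by
        rw [hl', div_le_one hN0]; exact_mod_cast hj
      have hjl : (j : ℝ) / N = l - 1 / N := by rw [hl']; ring
      rw [hjl] at ih'
      have hx' : -m + α / 2 * (f y - f x) ^ 2 ≤ G.lap f x + G.gamma f x := by linarith [hl x]
      have hy' : -m + α / 2 * (f y - f x) ^ 2 ≤ G.lap f y + G.gamma f y := by linarith [hl y]
      have h3 := mul_le_mul_of_nonneg_left hx' (by linarith : 0 ≤ 1 - l)
      have h4 := mul_le_mul_of_nonneg_left hy' hl0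
      have h5 := mul_le_mul_of_nonneg_left (add_le_add h3 h4) hτ.le
      -- completing the square
      have h6 : 0 ≤ τ * (α / 2 * (f y - f x) ^ 2) + 1 / N * (f y - f x)
          + 1 / (2 * α * τ * N ^ 2) := by
        have e : τ * (α / 2 * (f y - f x) ^ 2) + 1 / N * (f y - f x) + 1 / (2 * α * τ * N ^ 2)
            = α * τ / 2 * ((f y - f x) + 1 / (α * τ * N)) ^ 2 := by
          field_simp; ring
        rw [e]; positivity
      nlinarith
  have h := key N le_rfl
  rw [div_self hN0.ne'] at h
  have e : (N : ℝ) * (τ * m + 1 / (2 * α * τ * N ^ 2)) = τ * m * N + 1 / (2 * α * τ * N) := by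
    field_simp
  rw [e] at h
  linarith

/-- Harnack inequality. -/
lemma harnack {α : ℝ} (hG : G.BoundedGeometry α) {τ : ℝ} (hτ : 0 < τ) {u : V → ℝ} {m : ℝ}
    {k₀ N D : ℕ} (hN : 0 < N)
    (hL : ∀ k, k₀ ≤ k → k < k₀ + D * N → ∀ x, -m ≤ G.lap (G.flow τ u k) x)
    {x y : V} (hxy : G.dist x y ≤ D) :
    G.flow τ u k₀ x - D * (τ * m * N + 1 / (2 * α * τ * N)) ≤ G.flow τ u (k₀ + D * N) y := by
  have hα := hG.1
  induction D generalizing y with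
  | zero =>
    have h0 : G.dist x y = 0 := Nat.le_zero.mp hxy
    have hp := isPath_dist (G := G) x y
    rw [h0, isPath_zero] at hp
    subst hp
    simp
  | succ D ih =>
    have hlt : D * N < (D + 1) * N := by nlinarith
    have ih' : ∀ {z}, G.dist x z ≤ D → _ := fun {z} hz =>
      ih (y := z) (fun k h1 h2 => hL k h1 (by omega)) hz
    have e : k₀ + (D + 1) * N = (k₀ + D * N) + N := by ring
    have hpos : 0 ≤ 1 / (2 * α * τ * N) := by positivity
    push_cast
    rcases dist_pred hxy with h | ⟨z, hz, hzy⟩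
    · have h1 := ih' h
      have hstay : ∀ j ≤ N, G.flow τ u (k₀ + D * N) y - j * (τ * m)
          ≤ G.flow τ u (k₀ + D * N + j) y := by
        intro j
        induction j with
        | zero => intro _; simp
        | succ j ihj =>
          intro hj
          have h2 := ihj (by omega)
          have h3 := hL (k₀ + D * N + j) (by omega) (by rw [add_mul]; omega) y
          have hx : G.flow τ u (k₀ + D * N + (j + 1)) y = G.flow τ u (k₀ + D * N + j) y
            + τ * (G.lap (G.flow τ u (k₀ + D * N + j)) y
              + G.gamma (G.flow τ u (k₀ + D * N + j)) y) := rfl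
          rw [hx]
          have h4 := gamma_nonneg (G := G) (G.flow τ u (k₀ + D * N + j)) y
          push_cast
          nlinarith
      have h2 := hstay N le_rfl
      rw [e]
      nlinarith
    · have h1 := ih' hz
      have h2 := harnack_edge hG hτ (u := u) (m := m) (k₀ := k₀ + D * N) hN
        (fun k h1 h2 => hL k (by omega) (by rw [add_mul]; omega)) hzy
      rw [e]
      nlinarith

end Aux3

end WeightedGraph
namespace WeightedGraph

section Aux4

variable {V : Type*} {G : WeightedGraph V}

lemma flow_support (hrev : ∀ x y, G.p x y * G.μ x = G.p y x * G.μ y) {τ : ℝ} {u : V → ℝ}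
    (hu : (Function.support u).Finite) (k : ℕ) : (Function.support (G.flow τ u k)).Finite := by
  induction k with
  | zero => exact hu
  | succ k ih => exact stp_support hrev ih

lemma flow_nonneg {τ : ℝ} (hτ : 0 ≤ τ) (hτ' : τ ≤ 1) {u : V → ℝ} (hu : ∀ x, 0 ≤ u x) (k : ℕ)
    (x : V) : 0 ≤ G.flow τ u k x := by
  induction k generalizing x with
  | zero => exact hu x
  | succ k ih => exact stp_nonneg hτ hτ' ih x

lemma flow_mass (hrev : ∀ x y, G.p x y * G.μ x = G.p y x * G.μ y) {τ : ℝ} (hτ : 0 ≤ τ)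
    (hτ' : τ ≤ 1 / 100) {u : V → ℝ} (hs : (Function.support u).Finite) {K : ℕ}
    (hgr : ∀ k ≤ K, G.Grad (G.flow τ u k) (1 / 2)) (k : ℕ) (hk : k ≤ K) :
    ∑' x, G.μ x * (Real.exp (2 * G.flow τ u k x) - 1)
      ≤ ∑' x, G.μ x * (Real.exp (2 * u x) - 1) := by
  induction k with
  | zero => exact le_rfl
  | succ k ih =>
    exact le_trans (mass_step hrev hτ hτ' (hgr k (by omega)) (flow_support hrev hs k))
      (ih (by omega))

/-- Doubling for large radii. -/
lemma doubling_large {α : ℝ} (hG : G.BoundedGeometry α) {n : ℕ} (hn : 0 < n) (hCD : G.CD 0 n)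
    (x₀ : V) {R : ℕ} (hR : 0 < R) {M : ℝ} (hM : M = 4 + n + 72 * n / α)
    (hMR : (M / R) ^ 2 ≤ α / 8) :
    ∑ y ∈ G.ballF x₀ (3 * R), G.μ y ≤ Real.exp (2 * M) * ∑ y ∈ G.ballF x₀ R, G.μ y := by
  have hα := hG.1
  have hrev := hG.2.2
  have hn0 : (0 : ℝ) < n := by exact_mod_cast hn
  have hR0 : (0 : ℝ) < R := by exact_mod_cast hR
  have hM0 : 0 < M := by rw [hM]; positivity
  set ε := M / R with hε
  have hε0 : 0 < ε := by positivity
  -- choice of the time step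
  obtain ⟨N, τ, hN, hτ0, hτ1, hτ2, hτ3, hτN⟩ : ∃ (N : ℕ) (τ : ℝ), 0 < N ∧ 0 < τ ∧ τ ≤ 1 / 100 ∧
      τ * ε ≤ 1 ∧ τ * R ^ 2 / n ≤ ε ^ 2 / 2 ∧ τ * N = R / (24 * n) := by
    obtain ⟨δ, hδ, h1, h2, h3⟩ : ∃ δ : ℝ, 0 < δ ∧ δ ≤ 1 / 100 ∧ δ ≤ 1 / ε ∧
        δ ≤ n * ε ^ 2 / (2 * R ^ 2) :=
      ⟨min (1 / 100) (min (1 / ε) (n * ε ^ 2 / (2 * R ^ 2))), by positivity, min_le_left _ _,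
        (min_le_right _ _).trans (min_le_left _ _), (min_le_right _ _).trans (min_le_right _ _)⟩
    obtain ⟨N, hN⟩ := exists_nat_gt (R / (24 * n) / δ)
    have hN0 : (0 : ℝ) < N := lt_trans (by positivity) hN
    have hτδ : R / (24 * n) / N ≤ δ := by
      rw [div_lt_iff₀ hδ] at hN
      rw [div_le_iff₀ hN0]
      linarith
    refine ⟨N, R / (24 * n) / N, by exact_mod_cast hN0, by positivity, hτδ.trans h1, ?_, ?_, ?_⟩
    · have := hτδ.trans h2
      rwa [le_div_iff₀ hε0] at this
    · have := hτδ.trans h3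
      rw [le_div_iff₀ (by positivity)] at this
      rw [div_le_iff₀ hn0]
      linarith
    · field_simp
  have hτ4 : τ ≤ 1 / 4 := by linarith
  set D := 3 * R with hD
  have hDN : 0 < D * N := by positivity
  have hDr : (D : ℝ) = 3 * R := by rw [hD]; push_cast; ring
  have hs : τ * ((D * N : ℕ) : ℝ) = R ^ 2 / (8 * n) := by
    push_cast
    rw [hDr]
    calc τ * (3 * R * N) = 3 * R * (τ * N) := by ring
      _ = _ := by rw [hτN]; field_simp; ring
  set K := D * N + D * N with hK
  -- the initial datum
  set v : V → ℝ := fun y => ε * max 0 ((R : ℝ) - G.dist x₀ y) with hv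
  have hv0 : ∀ y, 0 ≤ v y := fun y => mul_nonneg hε0.le (le_max_left _ _)
  have hvM : ∀ y, v y ≤ M := fun y => by
    have h1 : max 0 ((R : ℝ) - G.dist x₀ y) ≤ R :=
      max_le hR0.le (by have : (0 : ℝ) ≤ G.dist x₀ y := by positivity
                        linarith)
    calc v y ≤ ε * R := mul_le_mul_of_nonneg_left h1 hε0.le
      _ = M := by rw [hε]; field_simp
  have hvx : v x₀ = M := by
    simp only [hv, dist_self']
    rw [Nat.cast_zero, sub_zero, max_eq_right hR0.le, hε]; field_simp
  have hvout : ∀ y, y ∉ G.ballF x₀ R → v y = 0 := fun y hy => by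
    rw [mem_ballF, not_le] at hy
    have : (R : ℝ) < G.dist x₀ y := by exact_mod_cast hy
    simp only [hv]
    rw [max_eq_left (by linarith), mul_zero]
  have hvs : (Function.support v).Finite := by
    refine (G.ballF x₀ R).finite_toSet.subset fun y hy => ?_
    by_contra h
    exact hy (hvout y h)
  have hvg : G.Grad v ε := by
    intro y z hyz
    have h1 : (G.dist x₀ z : ℝ) ≤ G.dist x₀ y + 1 := by exact_mod_cast dist_step hyz
    have h2 : (G.dist x₀ y : ℝ) ≤ G.dist x₀ z + 1 := by
      exact_mod_cast dist_step (p_symm hrev hyz)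
    simp only [hv]
    rw [← mul_sub, abs_mul, abs_of_pos hε0]
    have h3 : |max 0 ((R : ℝ) - G.dist x₀ z) - max 0 ((R : ℝ) - G.dist x₀ y)| ≤ 1 := by
      refine le_trans (abs_max_sub_max_le_max _ _ _ _) (max_le (by simp) ?_)
      rw [abs_le]; constructor <;> linarith
    nlinarith
  have hvΓ : ∀ y, G.gamma v y ≤ ε ^ 2 / 2 := fun y => gamma_le_of (hvg y)
  have herr : 4 * τ ^ 2 * K ≤ ε ^ 2 / 2 := by
    have e : 4 * τ ^ 2 * (K : ℝ) = 8 * τ * (τ * ((D * N : ℕ) : ℝ)) := by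
      rw [hK]; push_cast; ring
    rw [e, hs]
    refine le_trans (le_of_eq ?_) hτ3
    field_simp
  have hKα : ε ^ 2 / 2 + 4 * τ ^ 2 * K ≤ α / 8 := by linarith
  have hgr : ∀ k ≤ K, G.Grad (G.flow τ v k) (1 / 2) :=
    flow_grad hG hn hCD hτ0.le hτ4 hvΓ hKα
  have hF : ∀ k ≤ K, ∀ x, G.gamma (G.flow τ v k) x
      + (2 * (τ * k) / n) * (max 0 (-G.lap (G.flow τ v k) x)) ^ 2 ≤ ε ^ 2 := by
    intro k hk x
    have h1 := flow_F hG hn hCD hτ0.le hτ4 hvΓ hKα k hk x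
    have h2 : (k : ℝ) ≤ K := by exact_mod_cast hk
    have h3 : 4 * τ ^ 2 * k ≤ 4 * τ ^ 2 * K := by gcongr
    linarith
  -- short time bound
  have hshort : M - 1 - M / 2 ≤ G.flow τ v (D * N) x₀ := by
    have h1 := flow_short hn hτ0 hε0.le (hvg.le_lap) hF x₀ (D * N - 1) (by omega)
    rw [Nat.sub_add_cancel hDN, hvx] at h1
    have h2 : √(2 * n * τ) * √((D * N - 1 : ℕ) : ℝ) ≤ R / 2 := by
      rw [← Real.sqrt_mul (by positivity)]
      refine Real.sqrt_le_iff.mpr ⟨by positivity, ?_⟩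
      have h3 : ((D * N - 1 : ℕ) : ℝ) ≤ ((D * N : ℕ) : ℝ) := by exact_mod_cast Nat.sub_le _ _
      calc 2 * n * τ * ((D * N - 1 : ℕ) : ℝ) ≤ 2 * n * τ * ((D * N : ℕ) : ℝ) := by gcongr
        _ = 2 * n * (τ * ((D * N : ℕ) : ℝ)) := by ring
        _ = (R / 2) ^ 2 := by rw [hs]; field_simp; ring
        _ ≤ _ := le_rfl
    have h4 := mul_le_mul_of_nonneg_left h2 hε0.le
    have h5 : ε * (R / 2) = M / 2 := by rw [hε]; field_simp
    rw [← mul_assoc] at h4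
    linarith
  -- Li-Yau
  have hLY : ∀ k, D * N ≤ k → k < D * N + D * N → ∀ x,
      -(4 * n ^ 2 / R ^ 2) ≤ G.lap (G.flow τ v k) x := by
    intro k hk1 hk2 x
    refine le_trans ?_ (flow_liyau hn hCD hτ0.le hτ4 hgr k (by omega) x)
    rw [neg_le_neg_iff]
    have h1 : ((D * N : ℕ) : ℝ) ≤ k := by exact_mod_cast hk1
    have h2 : R ^ 2 / (4 * n ^ 2) ≤ 2 + 2 * τ / n * k := by
      calc (R : ℝ) ^ 2 / (4 * n ^ 2) = 2 / n * (τ * ((D * N : ℕ) : ℝ)) := by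
            rw [hs]; field_simp; ring
        _ ≤ 2 / n * (τ * k) := by gcongr
        _ = 2 * τ / n * k := by ring
        _ ≤ _ := by linarith
    refine le_trans (one_div_le_one_div_of_le (by positivity) h2) (le_of_eq ?_)
    field_simp
  -- lower bound on the large ball
  have hlow : ∀ y ∈ G.ballF x₀ D, 1 ≤ G.flow τ v K y := by
    intro y hy
    have h1 := harnack hG hτ0 hN hLY (mem_ballF.mp hy)
    have h2 : (D : ℝ) * (τ * (4 * n ^ 2 / R ^ 2) * N + 1 / (2 * α * τ * N))
        = n / 2 + 36 * n / α := by
      have e : (D : ℝ) * (τ * (4 * n ^ 2 / R ^ 2) * N + 1 / (2 * α * τ * N))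
        = 3 * R * ((τ * N) * (4 * n ^ 2 / R ^ 2) + 1 / (2 * α * (τ * N))) := by
        rw [hDr]; ring_nf
      rw [e, hτN]; field_simp; ring
    rw [h2] at h1
    have h3 : M / 2 = 2 + n / 2 + 36 * n / α := by rw [hM]; ring
    linarith
  -- conclude by the mass estimate
  have hmass := flow_mass hrev hτ0.le hτ1 hvs hgr K le_rfl
  have hKs := flow_support hrev (τ := τ) hvs K
  have hK0 := flow_nonneg (G := G) hτ0.le (by linarith) hv0 K
  have hμ : ∀ y, 0 ≤ G.μ y := fun y => (G.μ_pos y).le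
  have hleft : ∑ y ∈ G.ballF x₀ D, G.μ y
      ≤ ∑' x, G.μ x * (Real.exp (2 * G.flow τ v K x) - 1) := by
    have hsum : Summable fun x => G.μ x * (Real.exp (2 * G.flow τ v K x) - 1) :=
      summable_of_hasFiniteSupport (hKs.subset fun x hx => by
        intro h; apply hx; simp [h])
    refine le_trans (Finset.sum_le_sum fun y hy => ?_) (hsum.sum_le_tsum (G.ballF x₀ D) fun y _ => ?_)
    · have h1 := hlow y hy
      have h2 := Real.add_one_le_exp (2 * G.flow τ v K y)
      exact le_mul_of_one_le_right (hμ y) (by linarith)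
    · have h2 := Real.add_one_le_exp (2 * G.flow τ v K y)
      exact mul_nonneg (hμ y) (by linarith [hK0 y])
  have hright : ∑' x, G.μ x * (Real.exp (2 * v x) - 1)
      ≤ Real.exp (2 * M) * ∑ y ∈ G.ballF x₀ R, G.μ y := by
    rw [tsum_eq_sum (s := G.ballF x₀ R) (fun y hy => by rw [hvout y hy]; simp), Finset.mul_sum]
    refine Finset.sum_le_sum fun y _ => ?_
    rw [mul_comm]
    refine mul_le_mul_of_nonneg_right ?_ (hμ y)
    have := Real.exp_le_exp.mpr (by linarith [hvM y] : 2 * v y ≤ 2 * M)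
    linarith
  linarith

end Aux4

end WeightedGraph

/-- If a weighted graph with bounded geometry (constant `α > 0`)
satisfies `CD(0,n)` for a positive integer `n`, then the doubling volume property
holds, with a constant depending only on `n` and `α`. -/
theorem doubling_volume_of_CD_zero_n (n : ℕ) (hn : 0 < n) (α : ℝ) (hα : 0 < α) :
    ∃ C_DV : ℝ, 0 < C_DV ∧
      ∀ (V : Type) [Countable V] (G : WeightedGraph V),
        G.BoundedGeometry α → G.CD 0 n →
          ∀ x : V, ∀ r : ℝ, 0 < r →
            G.ballMeasure x (2 * r) ≤ C_DV * G.ballMeasure x r := by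
  classical
  set M : ℝ := 4 + n + 72 * n / α with hM
  obtain ⟨R₀, hR₀⟩ := exists_nat_gt (M ^ 2 * (8 / α) + 1)
  refine ⟨Real.exp (2 * M) + (1 + 1 / α) ^ (R₀ + 1), by positivity, ?_⟩
  intro V _ G hG hCD x r hr
  rw [WeightedGraph.ballMeasure_eq x (by linarith : 0 ≤ 2 * r),
    WeightedGraph.ballMeasure_eq x hr.le]
  set R := ⌊r⌋₊ with hR
  have hμ : ∀ y, 0 ≤ G.μ y := fun y => (G.μ_pos y).le
  have hnn : 0 ≤ ∑ y ∈ G.ballF x R, G.μ y := Finset.sum_nonneg fun y _ => hμ y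
  have h2R : ⌊2 * r⌋₊ ≤ R + (R + 1) := by
    have h1 : r < R + 1 := Nat.lt_floor_add_one r
    have h2 : ⌊2 * r⌋₊ < R + (R + 1) + 1 := by
      rw [Nat.floor_lt (by linarith)]
      push_cast
      linarith
    omega
  have hmono : ∀ k l : ℕ, k ≤ l → ∑ y ∈ G.ballF x k, G.μ y ≤ ∑ y ∈ G.ballF x l, G.μ y :=
    fun k l hkl => Finset.sum_le_sum_of_subset_of_nonneg (fun y hy => by
      rw [WeightedGraph.mem_ballF] at hy ⊢
      omega) fun y _ _ => hμ y
  have hpow : 0 ≤ (1 + 1 / α) ^ (R₀ + 1) := by positivity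
  have hexp := Real.exp_pos (2 * M)
  rw [add_mul]
  by_cases hc : R₀ ≤ R
  · have hR₀1 : 0 < R := by
      have : (0 : ℝ) < R₀ := lt_trans (by positivity) hR₀
      have : 0 < R₀ := by exact_mod_cast this
      omega
    have hRr : (R₀ : ℝ) ≤ R := by exact_mod_cast hc
    have hMR : (M / R) ^ 2 ≤ α / 8 := by
      have h0 : (1 : ℝ) ≤ R := by exact_mod_cast hR₀1
      rw [div_pow, div_le_iff₀ (by positivity)]
      have h1 : M ^ 2 * (8 / α) ≤ R ^ 2 := by nlinarith
      have h2 := mul_le_mul_of_nonneg_left h1 (by positivity : 0 ≤ α / 8)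
      have e : α / 8 * (M ^ 2 * (8 / α)) = M ^ 2 := by field_simp
      linarith
    have h := WeightedGraph.doubling_large hG hn hCD x hR₀1 hM hMR
    have h1 := hmono _ _ (h2R.trans (by omega : R + (R + 1) ≤ 3 * R))
    have h2 := mul_nonneg hpow hnn
    linarith
  · have h := WeightedGraph.vol_add hG x R (R + 1)
    have h1 := hmono _ _ h2R
    have h2 : (1 + 1 / α) ^ (R + 1) ≤ (1 + 1 / α) ^ (R₀ + 1) :=
      pow_le_pow_right₀ (by have : 0 < 1 / α := by positivity
                            linarith) (by omega)
    have h3 := mul_le_mul_of_nonneg_right h2 hnn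
    have h4 := mul_nonneg hexp.le hnn
    linarith
end

section
/- Let G=(V,p,μ) be a weighted graph with bounded geometry with constant α>0 satisfying CD(0,n) for some positive integer n. Let u₀∈L^∞(V,μ) with ‖Γu₀‖_∞ < α/2 and let u:[0,∞)→L^∞(V,μ) be the solution of the modified heat equation with initial data u₀. Then for all 0 < T₁ < T₂ and all x,y∈V, u(T₁)(x) − u(T₂)(y) ≤ (n/2)·log(T₂/T₁) + 2·d(x,y)²/(α·(T₂−T₁)). -/
/-- The space `L^∞(V, μ)` of bounded functions on `V`, with the sup norm
`‖f‖_∞ = sup_x |f x|`. -/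
noncomputable abbrev Linf (V : Type*) := lp (fun _ : V => ℝ) ⊤

/-- `u : [0,∞) → L^∞(V,μ)` is a solution of the modified heat equation
`∂ₜ u = Δ u + Γ u` with initial data `u₀` and derivative `u'`: `u` is continuous
on `[0,∞)`, differentiable on `(0,∞)` with derivative `u'` continuous there,
`u 0 = u₀`, and `u' t = Δ (u t) + Γ (u t)` for all `t > 0`. -/
structure IsMHESolution {V : Type*} (G : WeightedGraph V) (u u' : ℝ → Linf V)
    (u₀ : Linf V) : Prop where
  init : u 0 = u₀
  cont : ContinuousOn u (Set.Ici 0)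
  derivCont : ContinuousOn u' (Set.Ioi 0)
  hasDeriv : ∀ t > (0 : ℝ), HasDerivAt u (u' t) t
  eqn : ∀ t > (0 : ℝ), ∀ x : V, u' t x = G.lap (fun y => u t y) x + G.gamma (fun y => u t y) x

open Set Filter Topology

namespace HarnackAux

/-- An abstract parabolic maximum principle. -/
theorem max_principle {V : Type*} (f f' : ℝ → V → ℝ) (a b C S₀ : ℝ) (hC : 0 < C)
    (hd : ∀ t ∈ Icc a b, ∀ x, HasDerivAt (fun s => f s x) (f' t x) t)
    (ha : ∀ x, f a x ≤ 0) (hS₀ : ∀ t ∈ Icc a b, ∀ x, f t x ≤ S₀)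
    (h : ∀ t ∈ Icc a b, ∀ x, 0 ≤ f t x → ∀ S, (∀ y, f t y ≤ S) →
      f' t x ≤ C * (S - f t x)) :
    ∀ t ∈ Icc a b, ∀ x, f t x ≤ 0 := by
  have step : ∀ S, 0 ≤ S → (∀ t ∈ Icc a b, ∀ x, f t x ≤ S) →
      ∀ t ∈ Icc a b, ∀ x, f t x ≤ S * (1 - Real.exp (-C * (b - a))) := by
    intro S hS hb t ht x
    have key : ∀ ε > 0, f t x ≤ (S + ε) * (1 - Real.exp (-C * (t - a))) := by
      intro ε hε
      have hB : ∀ s, HasDerivAt (fun s => (S + ε) * (1 - Real.exp (-C * (s - a))))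
          ((S + ε) * (C * Real.exp (-C * (s - a)))) s := by
        intro s
        have h1 : HasDerivAt (fun s => -C * (s - a)) (-C) s := by
          simpa using ((hasDerivAt_id s).sub_const a).const_mul (-C)
        have h2 := ((h1.exp).const_sub 1).const_mul (S + ε)
        exact h2.congr_deriv (by ring)
      refine image_le_of_deriv_right_lt_deriv_boundary' (f := fun s => f s x)
        (f' := fun s => f' s x) (a := a) (b := b)
        (fun s hs => (hd s hs x).continuousAt.continuousWithinAt)
        (fun s hs => (hd s ⟨hs.1, hs.2.le⟩ x).hasDerivWithinAt)
        (B := fun s => (S + ε) * (1 - Real.exp (-C * (s - a))))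
        (B' := fun s => (S + ε) * (C * Real.exp (-C * (s - a))))
        (by simpa using ha x)
        (fun s hs => (hB s).continuousAt.continuousWithinAt)
        (fun s hs => (hB s).hasDerivWithinAt) ?_ ht
      intro s hs heq
      have hs' : s ∈ Icc a b := ⟨hs.1, hs.2.le⟩
      have hexp : Real.exp (-C * (s - a)) ≤ 1 := by
        rw [Real.exp_le_one_iff]
        nlinarith [hs.1]
      have h0 : 0 ≤ f s x := by
        rw [heq]
        apply mul_nonneg <;> linarith
      have := h s hs' x h0 S (hb s hs')
      have hCe : 0 < C * ε := mul_pos hC hε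
      rw [heq] at this
      nlinarith
    have h1 : f t x ≤ S * (1 - Real.exp (-C * (t - a))) := by
      refine le_of_forall_pos_le_add fun ε hε => ?_
      have := key ε hε
      have := Real.exp_pos (-C * (t - a))
      nlinarith
    refine h1.trans (mul_le_mul_of_nonneg_left ?_ hS)
    have : Real.exp (-C * (b - a)) ≤ Real.exp (-C * (t - a)) := by
      rw [Real.exp_le_exp]
      nlinarith [ht.2]
    linarith
  intro t ht x
  have hab : a ≤ b := ht.1.trans ht.2
  set θ := 1 - Real.exp (-C * (b - a)) with hθ
  have hθ1 : θ < 1 := by have := Real.exp_pos (-C * (b - a)); linarith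
  have hθ0 : 0 ≤ θ := by
    have : Real.exp (-C * (b - a)) ≤ 1 := by
      rw [Real.exp_le_one_iff]; nlinarith
    linarith
  have it : ∀ k : ℕ, ∀ t ∈ Icc a b, ∀ x, f t x ≤ max S₀ 0 * θ ^ k := by
    intro k
    induction k with
    | zero => intro t ht x; simpa using Or.inl (hS₀ t ht x)
    | succ k ih =>
      intro t ht x
      have := step _ (by positivity) ih t ht x
      rw [pow_succ, ← mul_assoc]
      exact this
  have lim : Tendsto (fun k : ℕ => max S₀ 0 * θ ^ k) atTop (𝓝 (max S₀ 0 * 0)) :=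
    (tendsto_pow_atTop_nhds_zero_of_lt_one hθ0 hθ1).const_mul _
  rw [mul_zero] at lim
  exact ge_of_tendsto' lim fun k => it k t ht x

section graph

variable {V : Type*} (G : WeightedGraph V)

/-- The finite set of neighbours. -/
noncomputable def nb (x : V) : Finset V := (G.locallyFinite x).toFinset

theorem p_eq_zero {x y : V} (h : y ∉ nb G x) : G.p x y = 0 := by
  simp only [nb, Set.Finite.mem_toFinset, Set.mem_ofPred_eq, not_lt] at h
  exact le_antisymm h (G.p_nonneg x y)

theorem sum_p (x : V) : ∑ y ∈ nb G x, G.p x y = 1 := by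
  rw [← (G.markov x).tsum_eq]
  exact (tsum_eq_sum fun y hy => p_eq_zero G hy).symm

theorem lap_eq (f : V → ℝ) (x : V) :
    G.lap f x = ∑ y ∈ nb G x, G.p x y * (f y - f x) :=
  tsum_eq_sum fun y hy => by rw [p_eq_zero G hy, zero_mul]

theorem gamma_eq (f : V → ℝ) (x : V) :
    G.gamma f x = (1 / 2) * ∑ y ∈ nb G x, G.p x y * (f y - f x) ^ 2 := by
  unfold WeightedGraph.gamma
  rw [tsum_eq_sum fun y hy => by rw [p_eq_zero G hy, zero_mul]]

theorem gammaBil_eq (f g : V → ℝ) (x : V) :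
    G.gammaBil f g x = (1 / 2) * ∑ y ∈ nb G x, G.p x y * (f y - f x) * (g y - g x) := by
  unfold WeightedGraph.gammaBil
  rw [tsum_eq_sum fun y hy => by rw [p_eq_zero G hy, zero_mul, zero_mul]]

theorem lap_add (f g : V → ℝ) (x : V) :
    G.lap (fun y => f y + g y) x = G.lap f x + G.lap g x := by
  simp only [lap_eq, ← Finset.sum_add_distrib]
  exact Finset.sum_congr rfl fun y _ => by ring

theorem gammaBil_add (u f g : V → ℝ) (x : V) :
    G.gammaBil u (fun y => f y + g y) x = G.gammaBil u f x + G.gammaBil u g x := by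
  simp only [gammaBil_eq, ← mul_add, ← Finset.sum_add_distrib]
  congr 1
  exact Finset.sum_congr rfl fun y _ => by ring

/-- The drift Laplacian is bounded at `x` by the supremum. -/
theorem drift_le (u f : V → ℝ) (x : V) (S : ℝ) (hf : ∀ y, f y ≤ S)
    (hu : ∀ y, 0 < G.p x y → |u y - u x| ≤ 1) :
    G.lap f x + 2 * G.gammaBil u f x ≤ 2 * (S - f x) := by
  have e : G.lap f x + 2 * G.gammaBil u f x
      = ∑ y ∈ nb G x, G.p x y * ((1 + (u y - u x)) * (f y - f x)) := by
    rw [lap_eq, gammaBil_eq, ← mul_assoc]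
    norm_num
    rw [← Finset.sum_add_distrib]
    exact Finset.sum_congr rfl fun y _ => by ring
  rw [e]
  calc _ ≤ ∑ y ∈ nb G x, G.p x y * (2 * (S - f x)) := by
        refine Finset.sum_le_sum fun y hy => ?_
        have hp : 0 < G.p x y := by simpa [nb] using hy
        have h1 := abs_le.1 (hu y hp)
        refine mul_le_mul_of_nonneg_left ?_ hp.le
        have := hf y
        have := hf x
        nlinarith
    _ = _ := by rw [← Finset.sum_mul, sum_p, one_mul]

theorem gamma_lower {α : ℝ} (hbg : G.BoundedGeometry α) (f : V → ℝ) {x y : V}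
    (h : 0 < G.p x y) : α / 2 * (f y - f x) ^ 2 ≤ G.gamma f x := by
  rw [gamma_eq]
  have h1 : G.p x y * (f y - f x) ^ 2 ≤ ∑ z ∈ nb G x, G.p x z * (f z - f x) ^ 2 :=
    Finset.single_le_sum (f := fun z => G.p x z * (f z - f x) ^ 2)
      (fun z _ => mul_nonneg (G.p_nonneg x z) (sq_nonneg _)) (by simpa [nb] using h)
  have h2 := mul_le_mul_of_nonneg_right (hbg.2.1 x y h) (sq_nonneg (f y - f x))
  linarith

theorem osc_le {α : ℝ} (hbg : G.BoundedGeometry α) (f : V → ℝ) {x : V}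
    (hx : G.gamma f x ≤ α / 2) (y : V) (h : 0 < G.p x y) : |f y - f x| ≤ 1 := by
  have h1 := gamma_lower G hbg f h
  have h0 := hbg.1
  rw [← sq_le_one_iff_abs_le_one]
  nlinarith

theorem gamma_diff (f g : V → ℝ) (A B : ℝ) (hA : ∀ y, |f y - g y| ≤ A)
    (hB : ∀ y, |f y + g y| ≤ B) (x : V) :
    G.gamma f x - G.gamma g x ≤ 2 * A * B := by
  rw [gamma_eq, gamma_eq, ← mul_sub, ← Finset.sum_sub_distrib]
  have hA0 : 0 ≤ A := (abs_nonneg _).trans (hA x)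
  have : ∑ y ∈ nb G x, (G.p x y * (f y - f x) ^ 2 - G.p x y * (g y - g x) ^ 2)
      ≤ ∑ y ∈ nb G x, G.p x y * (4 * A * B) := by
    refine Finset.sum_le_sum fun y _ => ?_
    rw [← mul_sub]
    refine mul_le_mul_of_nonneg_left ?_ (G.p_nonneg x y)
    have e : (f y - f x) ^ 2 - (g y - g x) ^ 2
        = ((f y - g y) - (f x - g x)) * ((f y + g y) - (f x + g x)) := by ring
    rw [e]
    refine (le_abs_self _).trans ?_
    rw [abs_mul]
    have h1 : |(f y - g y) - (f x - g x)| ≤ 2 * A :=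
      (abs_sub _ _).trans (by linarith [hA x, hA y])
    have h2 : |(f y + g y) - (f x + g x)| ≤ 2 * B :=
      (abs_sub _ _).trans (by linarith [hB x, hB y])
    calc _ ≤ (2 * A) * (2 * B) := mul_le_mul h1 h2 (abs_nonneg _) (by linarith)
      _ = _ := by ring
  rw [← Finset.sum_mul, sum_p, one_mul] at this
  linarith

theorem lap_lower (f : V → ℝ) (A : ℝ) (hA : ∀ y, |f y| ≤ A) (x : V) :
    - G.lap f x ≤ 2 * A := by
  rw [lap_eq, ← Finset.sum_neg_distrib]
  calc _ ≤ ∑ y ∈ nb G x, G.p x y * (2 * A) := by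
        refine Finset.sum_le_sum fun y _ => ?_
        rw [← mul_neg]
        refine mul_le_mul_of_nonneg_left ?_ (G.p_nonneg x y)
        have := abs_le.1 (hA x)
        have := abs_le.1 (hA y)
        linarith
    _ = _ := by rw [← Finset.sum_mul, sum_p, one_mul]

theorem lap_deriv (v v' : ℝ → V → ℝ) (t : ℝ) (h : ∀ y, HasDerivAt (fun s => v s y) (v' t y) t)
    (x : V) : HasDerivAt (fun s => G.lap (v s) x) (G.lap (v' t) x) t := by
  simp only [lap_eq]
  exact HasDerivAt.fun_sum fun y _ => ((h y).sub (h x)).const_mul _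

theorem gamma_deriv (v v' : ℝ → V → ℝ) (t : ℝ) (h : ∀ y, HasDerivAt (fun s => v s y) (v' t y) t)
    (x : V) : HasDerivAt (fun s => G.gamma (v s) x) (2 * G.gammaBil (v t) (v' t) x) t := by
  simp only [gamma_eq, gammaBil_eq]
  have := (HasDerivAt.fun_sum (u := nb G x) fun y _ =>
    (((h y).sub (h x)).pow 2).const_mul (G.p x y)).const_mul (1 / 2 : ℝ)
  refine this.congr_deriv ?_
  rw [← mul_assoc, Finset.mul_sum, Finset.mul_sum]
  refine Finset.sum_congr rfl fun y _ => ?_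
  simp
  ring

end graph

section sol

variable {V : Type*} {G : WeightedGraph V} {u u' : ℝ → Linf V} {u₀ : Linf V}

theorem lp_abs_le (f : Linf V) (x : V) : |f x| ≤ ‖f‖ :=
  lp.norm_apply_le_norm ENNReal.top_ne_zero f x

theorem sol_deriv (hu : IsMHESolution G u u' u₀) {t : ℝ} (ht : 0 < t) (x : V) :
    HasDerivAt (fun s => u s x) (u' t x) t := by
  have h := (lp.evalCLM ℝ (fun _ : V => ℝ) ⊤ x).hasFDerivAt.comp_hasDerivAt t
    (hu.hasDeriv t ht)
  exact h

theorem sol_eqn (hu : IsMHESolution G u u' u₀) {t : ℝ} (ht : 0 < t) :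
    (fun x => u' t x) = fun x => G.lap (fun y => u t y) x + G.gamma (fun y => u t y) x :=
  funext fun x => hu.eqn t ht x

theorem gamma_evolution (hu : IsMHESolution G u u' u₀) {n : ℕ} (hCD : G.CD 0 n)
    {t : ℝ} (ht : 0 < t) (x : V) :
    2 * G.gammaBil (fun y => u t y) (fun y => u' t y) x ≤
      G.lap (G.gamma (fun y => u t y)) x
        + 2 * G.gammaBil (fun y => u t y) (G.gamma (fun y => u t y)) x := by
  rw [sol_eqn hu ht, gammaBil_add]
  have h := hCD (fun y => u t y) x
  have h2 : 0 ≤ (1 / (n : ℝ)) * G.lap (fun y => u t y) x ^ 2 := by positivity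
  unfold WeightedGraph.gamma2 at h
  have e1 : (fun y => G.lap (fun y => u t y) y) = G.lap (fun y => u t y) := rfl
  have e2 : (fun y => G.gamma (fun y => u t y) y) = G.gamma (fun y => u t y) := rfl
  linarith

theorem lap_evolution (hu : IsMHESolution G u u' u₀) {n : ℕ} (hCD : G.CD 0 n)
    {t : ℝ} (ht : 0 < t) (x : V) :
    G.lap (G.lap (fun y => u t y)) x
        + 2 * G.gammaBil (fun y => u t y) (G.lap (fun y => u t y)) x
        + 2 * ((1 / (n : ℝ)) * G.lap (fun y => u t y) x ^ 2)
      ≤ G.lap (fun y => u' t y) x := by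
  rw [sol_eqn hu ht, lap_add]
  have h := hCD (fun y => u t y) x
  unfold WeightedGraph.gamma2 at h
  linarith

theorem sol_bdd (hu : IsMHESolution G u u' u₀) (b : ℝ) :
    ∃ M, 0 ≤ M ∧ ∀ t ∈ Icc 0 b, ‖u t‖ ≤ M := by
  obtain ⟨M, hM⟩ := isCompact_Icc.exists_bound_of_continuousOn
    (hu.cont.mono (Icc_subset_Ici_self : Icc 0 b ⊆ Ici 0))
  exact ⟨max M 0, le_max_right _ _, fun t ht => (hM t ht).trans (le_max_left _ _)⟩

/-- Uniform-in-space continuity in time of `Γ u`. -/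
theorem gamma_near (hu : IsMHESolution G u u' u₀) {s : ℝ} (hs : 0 ≤ s) {β γ : ℝ} (hβ : β < γ)
    (h : ∀ x, G.gamma (fun y => u s y) x ≤ β) :
    ∀ᶠ t in 𝓝[≥] s, ∀ x, G.gamma (fun y => u t y) x ≤ γ := by
  have hc : ContinuousWithinAt u (Ici s) s := (hu.cont s hs).mono (Ici_subset_Ici.2 hs)
  have h1 : Tendsto (fun t => 2 * ‖u t - u s‖ * ‖u t + u s‖) (𝓝[≥] s)
      (𝓝 (2 * ‖u s - u s‖ * ‖u s + u s‖)) :=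
    ((hc.sub continuousWithinAt_const).norm.const_mul 2).mul
      (hc.add continuousWithinAt_const).norm
  simp only [sub_self, norm_zero, mul_zero, zero_mul] at h1
  filter_upwards [h1.eventually (gt_mem_nhds (sub_pos.2 hβ))] with t ht x
  have := gamma_diff G (fun y => u t y) (fun y => u s y) _ _
    (fun y => lp_abs_le (u t - u s) y) (fun y => lp_abs_le (u t + u s) y) x
  have := h x
  linarith

/-- The gradient bound is preserved. -/
theorem gradient_bound (hu : IsMHESolution G u u' u₀) {α : ℝ} (hbg : G.BoundedGeometry α) {n : ℕ}
    (hCD : G.CD 0 n) {δ β : ℝ} (hδ : 0 < δ) (hβ : β < α / 2)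
    (h : ∀ x, G.gamma (fun y => u δ y) x ≤ β) (b : ℝ) :
    ∀ t ∈ Icc δ b, ∀ x, G.gamma (fun y => u t y) x ≤ β := by
  have hder : ∀ t, 0 < t → ∀ x, HasDerivAt (fun s => G.gamma (fun y => u s y) x)
      (2 * G.gammaBil (fun y => u t y) (fun y => u' t y) x) t := fun t ht x =>
    gamma_deriv G (fun s y => u s y) (fun s y => u' s y) t (fun y => sol_deriv hu ht y) x
  let s : Set ℝ := {t | ∀ x, G.gamma (fun y => u t y) x ≤ β}
  change Icc δ b ⊆ s
  refine IsClosed.Icc_subset_of_forall_exists_gt ?_ h ?_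
  · have : s ∩ Icc δ b = Icc δ b ∩ ⋂ x, {t ∈ Icc δ b | G.gamma (fun y => u t y) x ≤ β} := by
      ext t
      constructor
      · rintro ⟨h1, h2⟩
        exact ⟨h2, mem_iInter.2 fun x => ⟨h2, h1 x⟩⟩
      · rintro ⟨h2, h1⟩
        exact ⟨fun x => (mem_iInter.1 h1 x).2, h2⟩
    rw [this]
    refine isClosed_Icc.inter (isClosed_iInter fun x => ?_)
    refine isClosed_Icc.isClosed_le (fun t ht => ?_) continuousOn_const
    exact (hder t (hδ.trans_le ht.1) x).continuousAt.continuousWithinAt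
  · rintro t ⟨hts, ht⟩ c hc
    have ht0 : 0 < t := hδ.trans_le ht.1
    have hev := gamma_near hu ht0.le hβ hts
    rw [eventually_nhdsWithin_iff, Metric.eventually_nhds_iff] at hev
    obtain ⟨r, hr, hr'⟩ := hev
    let d := min c (t + r / 2)
    have hd : t < d := lt_min hc (by linarith)
    have hdr : d ≤ t + r / 2 := min_le_right _ _
    refine ⟨d, ?_, hd, min_le_left _ _⟩
    have hsm : ∀ s ∈ Icc t d, ∀ x, G.gamma (fun y => u s y) x ≤ α / 2 := fun s hs =>
      hr' (by rw [Real.dist_eq, abs_of_nonneg (by linarith [hs.1])]; linarith [hs.2]) hs.1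
    have := max_principle (fun s x => G.gamma (fun y => u s y) x - β)
      (fun t x => 2 * G.gammaBil (fun y => u t y) (fun y => u' t y) x) t d 2 (α / 2 - β)
      (by norm_num) (fun s hs x => (hder s (ht0.trans_le hs.1) x).sub_const _)
      (fun x => by have := hts x; simp only; linarith)
      (fun s hs x => by have := hsm s hs x; simp only; linarith)
      (fun s hs x _ S hS => by
        refine (gamma_evolution hu hCD (ht0.trans_le hs.1) x).trans ?_
        have := drift_le G (fun y => u s y) (G.gamma (fun y => u s y)) x (S + β)
          (fun y => by have := hS y; simp only at this; linarith)
          (osc_le G hbg _ (hsm s hs x))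
        refine this.trans (le_of_eq ?_)
        ring)
    intro x
    have := this d ⟨hd.le, le_rfl⟩ x
    simp only at this
    linarith

/-- The Li–Yau inequality. -/
theorem li_yau (hu : IsMHESolution G u u' u₀) {α : ℝ} (hbg : G.BoundedGeometry α) {n : ℕ}
    (hn : 0 < n) (hCD : G.CD 0 n) {δ β : ℝ} (hδ : 0 < δ) (hβ : β < α / 2)
    (h : ∀ x, G.gamma (fun y => u δ y) x ≤ β)
    (hδ' : δ * (2 * ‖u δ‖) ≤ n / 2) (t : ℝ) (ht : δ ≤ t) (x : V) :
    - (n / 2 / t) ≤ G.lap (fun y => u t y) x := by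
  have hn' : (0 : ℝ) < n := by exact_mod_cast hn
  have hg := gradient_bound hu hbg hCD hδ hβ h t
  obtain ⟨M, hM0, hM⟩ := sol_bdd hu t
  have key := max_principle (fun s x => s * (- G.lap (fun y => u s y) x) - n / 2)
    (fun s x => 1 * (- G.lap (fun y => u s y) x) + s * (- G.lap (fun y => u' s y) x))
    δ t 2 (t * (2 * M)) (by norm_num)
    (fun s hs x => ((hasDerivAt_id s).mul
      (lap_deriv G (fun s y => u s y) (fun s y => u' s y) s
        (fun y => sol_deriv hu (hδ.trans_le hs.1) y) x).neg).sub_const _)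
    (fun x => by
      have h1 := lap_lower G (fun y => u δ y) _ (lp_abs_le (u δ)) x
      have := mul_le_mul_of_nonneg_left h1 hδ.le
      simp only
      linarith)
    (fun s hs x => by
      have hs0 := hδ.trans_le hs.1
      have h1 := lap_lower G (fun y => u s y) M
        (fun y => (lp_abs_le (u s) y).trans (hM s ⟨hs0.le, hs.2⟩)) x
      have h2 := mul_le_mul_of_nonneg_left h1 hs0.le
      have h3 : s * (2 * M) ≤ t * (2 * M) := mul_le_mul_of_nonneg_right hs.2 (by linarith)
      simp only
      linarith)
    (fun s hs x hx S hS => by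
      have hs0 := hδ.trans_le hs.1
      simp only at hx hS ⊢
      have h1 := lap_evolution hu hCD hs0 x
      set L := G.lap (fun y => u s y) with hL
      have h2 := drift_le G (fun y => u s y) (fun y => s * (- L y)) x (S + n / 2)
        (fun y => by have := hS y; linarith)
        (osc_le G hbg _ ((hg s hs x).trans hβ.le))
      have e1 : G.lap (fun y => s * (- L y)) x = - (s * G.lap L x) := by
        rw [lap_eq, lap_eq, Finset.mul_sum, ← Finset.sum_neg_distrib]
        exact Finset.sum_congr rfl fun y _ => by ring
      have e2 : G.gammaBil (fun y => u s y) (fun y => s * (- L y)) x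
          = - (s * G.gammaBil (fun y => u s y) L x) := by
        rw [gammaBil_eq, gammaBil_eq, mul_left_comm, ← mul_neg]
        congr 1
        rw [Finset.mul_sum, ← Finset.sum_neg_distrib]
        exact Finset.sum_congr rfl fun y _ => by ring
      rw [e1, e2] at h2
      have h3 := mul_le_mul_of_nonneg_left h1 hs0.le
      have h4 : - L x ≤ s * (2 * ((1 / (n : ℝ)) * L x ^ 2)) := by
        have h5 : 0 < - L x := by
          by_contra hcon
          nlinarith
        have h6 : 1 ≤ s * (- L x) * (2 / n) := by
          have : (n : ℝ) / 2 ≤ s * (- L x) := by linarith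
          calc (1 : ℝ) = n / 2 * (2 / n) := by field_simp
            _ ≤ _ := mul_le_mul_of_nonneg_right this (by positivity)
        have h7 := mul_le_mul_of_nonneg_right h6 h5.le
        calc - L x = 1 * (- L x) := by ring
          _ ≤ _ := h7
          _ = _ := by ring
      nlinarith)
  have ht0 := hδ.trans_le ht
  have := key t ⟨ht, le_rfl⟩ x
  simp only at this
  rw [neg_le, le_div_iff₀ ht0]
  linarith

/-- Existence of a good starting time. -/
theorem exists_start (hu : IsMHESolution G u u' u₀) {α : ℝ} {n : ℕ} (hn : 0 < n)
    (h0 : supNorm (G.gamma (fun x => u₀ x)) < α / 2) {T : ℝ} (hT : 0 < T) :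
    ∃ δ β : ℝ, 0 < δ ∧ δ ≤ T ∧ β < α / 2 ∧ (∀ x, G.gamma (fun y => u δ y) x ≤ β) ∧
      δ * (2 * ‖u δ‖) ≤ n / 2 := by
  have hn' : (0 : ℝ) < n := by exact_mod_cast hn
  have hb : ∀ x, G.gamma (fun y => u 0 y) x ≤ supNorm (G.gamma (fun x => u₀ x)) := by
    intro x
    rw [hu.init]
    refine (le_abs_self _).trans
      (le_ciSup (f := fun x => |G.gamma (fun y => u₀ y) x|) ⟨2 * ‖u₀‖ * ‖u₀‖, ?_⟩ x)
    rintro _ ⟨z, rfl⟩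
    have h1 := gamma_diff G (fun y => u₀ y) (fun _ => 0) ‖u₀‖ ‖u₀‖
      (fun y => by simpa using lp_abs_le u₀ y) (fun y => by simpa using lp_abs_le u₀ y) z
    have h2 : G.gamma (fun _ => (0 : ℝ)) z = 0 := by simp [gamma_eq]
    have h3 : 0 ≤ G.gamma (fun y => u₀ y) z := by
      rw [gamma_eq]
      have := Finset.sum_nonneg (s := nb G z) fun y _ =>
        mul_nonneg (G.p_nonneg z y) (sq_nonneg (u₀ y - u₀ z))
      linarith
    simp only
    rw [abs_of_nonneg h3]
    linarith
  obtain ⟨β, hβ1, hβ2⟩ := exists_between h0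
  have e1 := (gamma_near hu le_rfl hβ1 hb).filter_mono (nhdsWithin_mono 0 Ioi_subset_Ici_self)
  obtain ⟨M, hM0, hM⟩ := sol_bdd hu T
  have e2 : ∀ᶠ t in 𝓝[>] (0 : ℝ), t ∈ Ioo 0 (min T (n / 2 / (2 * M + 1))) :=
    Ioo_mem_nhdsGT (by positivity)
  obtain ⟨δ, h1, h2⟩ := (e1.and e2).exists
  have h3 : δ ≤ T := h2.2.le.trans (min_le_left _ _)
  refine ⟨δ, β, h2.1, h3, hβ2, h1, ?_⟩
  have h4 : δ ≤ n / 2 / (2 * M + 1) := h2.2.le.trans (min_le_right _ _)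
  rw [le_div_iff₀ (by positivity)] at h4
  have h5 := hM δ ⟨h2.1.le, h3⟩
  refine le_trans (mul_le_mul_of_nonneg_left ?_ h2.1.le) h4
  linarith

/-- Elementary one-step estimate. -/
theorem one_step (g h g' h' : ℝ → ℝ) {c a b : ℝ} (hc : 0 < c) (hab : a < b)
    (hg : ∀ t ∈ Icc a b, HasDerivAt g (g' t) t) (hh : ∀ t ∈ Icc a b, HasDerivAt h (h' t) t)
    (hg' : ∀ t ∈ Icc a b, c * (g t - h t) ^ 2 ≤ g' t)
    (hh' : ∀ t ∈ Icc a b, c * (g t - h t) ^ 2 ≤ h' t) :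
    g a - h b ≤ 1 / (4 * c * (b - a)) := by
  have hba : 0 < b - a := sub_pos.2 hab
  have mv : ∀ (f f' : ℝ → ℝ), (∀ t ∈ Icc a b, HasDerivAt f (f' t) t) → ∀ K,
      (∀ t ∈ Icc a b, K ≤ f' t) → ∀ s ∈ Icc a b, ∀ t ∈ Icc a b, s ≤ t →
      K * (t - s) ≤ f t - f s := by
    intro f f' hf K hK
    refine (convex_Icc a b).mul_sub_le_image_sub_of_le_deriv
      (fun t ht => (hf t ht).continuousAt.continuousWithinAt)
      (fun t ht => (hf t (interior_subset ht)).differentiableAt.differentiableWithinAt) ?_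
    intro t ht
    rw [(hf t (interior_subset ht)).deriv]
    exact hK t (interior_subset ht)
  have hA : a ∈ Icc a b := ⟨le_rfl, hab.le⟩
  have hB : b ∈ Icc a b := ⟨hab.le, le_rfl⟩
  rcases le_or_gt (g a - h b) 0 with hD | hD
  · exact hD.trans (by positivity)
  obtain ⟨s, hs, hmin⟩ := isCompact_Icc.exists_isMinOn ⟨a, hA⟩
    (f := fun t => g t - h t) (s := Icc a b)
    (fun t ht => ((hg t ht).sub (hh t ht)).continuousAt.continuousWithinAt)
  have hm0 : 0 ≤ g s - h s := by
    have h1 := mv g g' hg 0 (fun t ht => le_trans (by positivity) (hg' t ht)) a hA s hs hs.1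
    have h2 := mv h h' hh 0 (fun t ht => le_trans (by positivity) (hh' t ht)) s hs b hB hs.2
    linarith
  set m := g s - h s with hm
  have hw : ∀ t ∈ Icc a b, c * m ^ 2 ≤ c * (g t - h t) ^ 2 := fun t ht =>
    mul_le_mul_of_nonneg_left (pow_le_pow_left₀ hm0 (hmin ht) 2) hc.le
  have h1 := mv g g' hg _ (fun t ht => (hw t ht).trans (hg' t ht)) a hA s hs hs.1
  have h2 := mv h h' hh _ (fun t ht => (hw t ht).trans (hh' t ht)) s hs b hB hs.2
  have h3 : g a - h b ≤ m - c * (b - a) * m ^ 2 := by linarith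
  refine h3.trans ?_
  rw [le_div_iff₀ (by positivity)]
  nlinarith [sq_nonneg (2 * (c * (b - a)) * m - 1)]

end sol

end HarnackAux

open HarnackAux

/-- **Harnack inequality.** On a weighted graph with bounded geometry
(constant `α > 0`) satisfying `CD(0,n)`, if `u` solves the modified heat equation
with initial data `u₀ ∈ L^∞(V,μ)`, `‖Γ u₀‖_∞ < α/2`, then for all `0 < T₁ < T₂`
and all `x, y ∈ V`,
`u(T₁)(x) - u(T₂)(y) ≤ (n/2) log(T₂/T₁) + 2 d(x,y)² / (α (T₂ - T₁))`. -/
theorem harnack_inequality {V : Type*} [Countable V]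
    (G : WeightedGraph V) (α : ℝ) (n : ℕ) (hn : 0 < n)
    (hbg : G.BoundedGeometry α) (hCD : G.CD 0 n) (u₀ : Linf V)
    (h0 : supNorm (G.gamma (fun x => u₀ x)) < α / 2)
    (u u' : ℝ → Linf V) (hu : IsMHESolution G u u' u₀) :
    ∀ T₁ T₂ : ℝ, 0 < T₁ → T₁ < T₂ → ∀ x y : V,
      u T₁ x - u T₂ y ≤
        ((n : ℝ) / 2) * Real.log (T₂ / T₁) +
          2 * (G.dist x y : ℝ) ^ 2 / (α * (T₂ - T₁)) := by
  intro T₁ T₂ hT₁ hT x y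
  have hα := hbg.1
  have hn' : (0 : ℝ) < n := by exact_mod_cast hn
  obtain ⟨δ, β, hδ, hδT, hβ, hΓ, hδn⟩ := exists_start hu hn h0 hT₁
  have LY := li_yau hu hbg hn hCD hδ hβ hΓ hδn
  let v : ℝ → V → ℝ := fun t z => u t z + (n : ℝ) / 2 * Real.log t
  have hv : ∀ t, T₁ ≤ t → ∀ z, HasDerivAt (fun s => v s z) (u' t z + (n : ℝ) / 2 * t⁻¹) t :=
    fun t ht z => (sol_deriv hu (hT₁.trans_le ht) z).add
      ((Real.hasDerivAt_log (hT₁.trans_le ht).ne').const_mul _)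
  have hv' : ∀ t, T₁ ≤ t → ∀ z, G.gamma (fun y => u t y) z ≤ u' t z + (n : ℝ) / 2 * t⁻¹ := by
    intro t ht z
    have h1 := LY t (hδT.trans ht) z
    rw [hu.eqn t (hT₁.trans_le ht) z]
    rw [div_eq_mul_inv _ t] at h1
    linarith
  have symm : ∀ z w, 0 < G.p z w → 0 < G.p w z := by
    intro z w h
    have h1 := hbg.2.2 z w
    have h2 : 0 < G.p w z * G.μ w := h1 ▸ mul_pos h (G.μ_pos z)
    exact pos_of_mul_pos_left h2 (G.μ_pos w).le
  have step : ∀ a b, T₁ ≤ a → a < b → ∀ z w, 0 < G.p z w →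
      v a z - v b w ≤ 1 / (2 * α * (b - a)) := by
    intro a b ha hab z w hzw
    have := one_step (fun t => v t z) (fun t => v t w) _ _ (half_pos hα) hab
      (fun t ht => hv t (ha.trans ht.1) z) (fun t ht => hv t (ha.trans ht.1) w)
      (fun t ht => by
        refine le_trans ?_ (hv' t (ha.trans ht.1) z)
        refine le_trans (le_of_eq ?_) (gamma_lower G hbg (fun y => u t y) hzw)
        simp only [v]; ring)
      (fun t ht => by
        refine le_trans ?_ (hv' t (ha.trans ht.1) w)
        refine le_trans (le_of_eq ?_) (gamma_lower G hbg (fun y => u t y) (symm z w hzw))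
        simp only [v]; ring)
    refine this.trans (le_of_eq ?_)
    ring
  have hlog : Real.log (T₂ / T₁) = Real.log T₂ - Real.log T₁ :=
    Real.log_div (hT₁.trans hT).ne' hT₁.ne'
  suffices hmain : v T₁ x - v T₂ y ≤ 2 * (G.dist x y : ℝ) ^ 2 / (α * (T₂ - T₁)) by
    simp only [v] at hmain
    rw [hlog]
    linarith
  have hmem : G.dist x y ∈ {n : ℕ | ∃ c : Fin (n + 1) → V,
    c 0 = x ∧ c (Fin.last n) = y ∧ ∀ i : Fin n, 0 < G.p (c i.castSucc) (c i.succ)} :=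
    Nat.sInf_mem (G.connected x y)
  obtain ⟨c, hc0, hcl, hc⟩ := hmem
  generalize G.dist x y = k at *
  have hTT : 0 < T₂ - T₁ := sub_pos.2 hT
  rcases Nat.eq_zero_or_pos k with rfl | hk
  · have hxy : x = y := by rw [← hc0, ← hcl]; rfl
    subst hxy
    have hmono : MonotoneOn (fun t => v t x) (Icc T₁ T₂) := by
      refine monotoneOn_of_deriv_nonneg (convex_Icc _ _)
        (fun t ht => (hv t ht.1 x).continuousAt.continuousWithinAt)
        (fun t ht => (hv t (interior_subset ht).1 x).differentiableAt.differentiableWithinAt) ?_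
      intro t ht
      rw [(hv t (interior_subset ht).1 x).deriv]
      refine le_trans ?_ (hv' t (interior_subset ht).1 x)
      rw [gamma_eq]
      have := Finset.sum_nonneg (s := nb G x) fun y _ =>
        mul_nonneg (G.p_nonneg x y) (sq_nonneg (u t y - u t x))
      linarith
    have := hmono ⟨le_rfl, hT.le⟩ ⟨hT.le, le_rfl⟩ hT.le
    simp only at this
    simp
    linarith
  · have hk' : (0 : ℝ) < k := by exact_mod_cast hk
    set h := (T₂ - T₁) / k with hh
    have hpos : 0 < h := div_pos hTT hk'
    have chain : ∀ i : ℕ, ∀ hi : i < k + 1,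
        v T₁ (c 0) - v (T₁ + i * h) (c ⟨i, hi⟩) ≤ i * (1 / (2 * α * h)) := by
      intro i
      induction i with
      | zero => intro hi; simp
      | succ i ih =>
        intro hi
        have h1 := ih (by omega)
        have h2 := step (T₁ + i * h) (T₁ + (i + 1 : ℕ) * h)
          (by have : 0 ≤ (i : ℝ) * h := by positivity
              linarith)
          (by push_cast; linarith) _ _ (hc ⟨i, by omega⟩)
        have e : (T₁ + (i + 1 : ℕ) * h) - (T₁ + i * h) = h := by push_cast; ring
        rw [e] at h2
        simp only [Fin.castSucc_mk, Fin.succ_mk] at h2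
        push_cast at h2 ⊢
        linarith
    have := chain k (by omega)
    have e : T₁ + k * h = T₂ := by rw [hh]; field_simp; ring
    have e2 : c ⟨k, by omega⟩ = y := hcl
    rw [e, e2, hc0] at this
    refine this.trans ?_
    have e3 : (k : ℝ) * (1 / (2 * α * h)) = (1 / 2) * (k ^ 2 / (α * (T₂ - T₁))) := by
      rw [hh]; field_simp
    rw [e3, mul_div_assoc]
    have : 0 ≤ (k : ℝ) ^ 2 / (α * (T₂ - T₁)) := by positivity
    linarith
end

section
/- Let G=(V,p,μ) be a weighted graph with bounded geometry satisfying CD(K,∞) for some K≥0. Then for every bounded function f:V→ℝ, every t>0 and every x∈V, Γ(P_t f)(x) ≤ e^{−2Kt}·P_t(Γf)(x). -/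
namespace WeightedGraph

/-- The heat semigroup `P_t = e^{tΔ} = ∑_{k ≥ 0} t^k Δ^k / k!`, applied pointwise. -/
noncomputable def heatSem {V : Type*} (G : WeightedGraph V) (t : ℝ) (f : V → ℝ) (x : V) : ℝ :=
  ∑' k : ℕ, t ^ k / (Nat.factorial k : ℝ) * ((G.lap)^[k] f) x

end WeightedGraph

namespace WeightedGraph

open BoundedContinuousFunction

section Abstract

variable {E : Type*} [NormedAddCommGroup E] [NormedSpace ℝ E]

/-- The operator exponential `exp (s A)`. -/
noncomputable def eop (A : E →L[ℝ] E) (s : ℝ) : E →L[ℝ] E := NormedSpace.exp (s • A)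

lemma eop_zero (A : E →L[ℝ] E) : eop A 0 = 1 := by
  rw [eop, zero_smul, NormedSpace.exp_zero]

variable [CompleteSpace E]

lemma hasSum_eop (A : E →L[ℝ] E) (s : ℝ) (g : E) (l : E →L[ℝ] ℝ) :
    HasSum (fun k : ℕ => s ^ k / (Nat.factorial k : ℝ) * l ((A ^ k) g)) (l (eop A s g)) := by
  have h := NormedSpace.exp_series_hasSum_exp' (𝕂 := ℝ) (s • A)
  have h2 := h.mapL (l.comp (ContinuousLinearMap.apply ℝ E g))
  refine h2.congr_fun ?_ 
  intro k
  rw [smul_pow, smul_smul, map_smul, smul_eq_mul, div_eq_inv_mul]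
  rfl

lemma hasDerivAt_eop (A : E →L[ℝ] E) (s : ℝ) : HasDerivAt (eop A) (eop A s * A) s :=
  hasDerivAt_exp_smul_const (𝕂 := ℝ) A s

lemma hasDerivAt_eop' (A : E →L[ℝ] E) (s : ℝ) : HasDerivAt (eop A) (A * eop A s) s :=
  hasDerivAt_exp_smul_const' (𝕂 := ℝ) A s

lemma hasDerivAt_eop_rev (A : E →L[ℝ] E) (t s : ℝ) (f : E) :
    HasDerivAt (fun r => eop A (t - r) f) (-(A (eop A (t - s) f))) s := by
  have h1 := (hasDerivAt_eop' A (t - s)).scomp s ((hasDerivAt_id s).const_sub t)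
  have h2 := h1.clm_apply (hasDerivAt_const s f)
  simpa [Function.comp_def] using h2

lemma hasDerivAt_eop_apply (A : E →L[ℝ] E) (s : ℝ) (w : ℝ → E) (w' : E) (hw : HasDerivAt w w' s)
    (l : E →L[ℝ] ℝ) :
    HasDerivAt (fun r => l (eop A r (w r))) (l (eop A s (A (w s) + w'))) s := by
  have h1 := (hasDerivAt_eop A s).clm_apply hw
  have h2 := l.hasFDerivAt.comp_hasDerivAt s h1
  refine h2.congr_deriv ?_
  simp

lemma eop_sub_one (A : E →L[ℝ] E) (s : ℝ) : eop (A - 1) s = Real.exp (-s) • eop A s := by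
  have h1 : s • (A - 1) = s • A + algebraMap ℝ _ (-s) := by
    rw [smul_sub, Algebra.algebraMap_eq_smul_one, neg_smul, sub_eq_add_neg]
  let _ : NormedAlgebra ℚ (E →L[ℝ] E) := NormedAlgebra.restrictScalars ℚ ℝ (E →L[ℝ] E)
  rw [eop, h1, NormedSpace.exp_add_of_commute (Algebra.commutes _ _).symm,
    ← NormedSpace.algebraMap_exp_comm, ← Real.exp_eq_exp_ℝ, Algebra.algebraMap_eq_smul_one,
    mul_smul_comm, mul_one, eop]

end Abstract

section Helpers

variable {V : Type*} (G : WeightedGraph V)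

lemma aux_summable (g : V → ℝ) (x : V) : Summable fun y => G.p x y * g y := by
  apply summable_of_hasFiniteSupport
  refine (G.locallyFinite x).subset fun y hy => ?_
  simp only [Function.mem_support] at hy
  exact lt_of_le_of_ne (G.p_nonneg x y) fun h => hy (by rw [← h, zero_mul])

/-- Averaging operator. -/
noncomputable def avg (g : V → ℝ) (x : V) : ℝ := ∑' y, G.p x y * g y

lemma lap_eq_avg (g : V → ℝ) (x : V) : G.lap g x = G.avg g x - g x := by
  have h1 := (G.aux_summable g x).hasSum.sub ((G.markov x).mul_right (g x))
  rw [one_mul] at h1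
  rw [avg, ← h1.tsum_eq, lap]
  exact tsum_congr fun y => by ring

lemma gammaBil_eq_s17 (g h : V → ℝ) (x : V) :
    2 * G.gammaBil g h x = G.lap (fun y => g y * h y) x - g x * G.lap h x - h x * G.lap g x := by
  have e (k : V → ℝ) : HasSum (fun y => G.p x y * (k y - k x)) (G.lap k x) :=
    (G.aux_summable (fun y => k y - k x) x).hasSum
  have h1 := ((e fun y => g y * h y).sub ((e h).mul_left (g x))).sub ((e g).mul_left (h x))
  rw [← h1.tsum_eq, gammaBil, ← mul_assoc, show (2 : ℝ) * (1 / 2) = 1 by norm_num, one_mul]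
  exact tsum_congr fun y => by ring

lemma gamma_eq_bil (g : V → ℝ) : G.gamma g = G.gammaBil g g := by
  funext x
  rw [gamma, gammaBil]
  congr 1
  exact tsum_congr fun y => by ring

lemma abs_avg_le (g : V → ℝ) (C : ℝ) (hg : ∀ y, |g y| ≤ C) (x : V) : |G.avg g x| ≤ C := by
  have hC := (G.markov x).mul_right C
  rw [one_mul] at hC
  rw [abs_le]
  constructor
  · exact hasSum_le (fun y => by
      have := mul_le_mul_of_nonneg_left (abs_le.1 (hg y)).1 (G.p_nonneg x y)
      linarith) hC.neg (G.aux_summable g x).hasSum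
  · exact hasSum_le (fun y =>
      mul_le_mul_of_nonneg_left (abs_le.1 (hg y)).2 (G.p_nonneg x y)) (G.aux_summable g x).hasSum hC

variable [TopologicalSpace V] [DiscreteTopology V]

/-- Averaging as a bounded operator. -/
noncomputable def M : (V →ᵇ ℝ) →L[ℝ] (V →ᵇ ℝ) :=
  LinearMap.mkContinuous
    { toFun := fun g => ofNormedAddCommGroupDiscrete (G.avg g) ‖g‖
        (G.abs_avg_le g ‖g‖ g.norm_coe_le_norm)
      map_add' := by
        intro g h
        ext x
        change G.avg (⇑(g + h)) x = G.avg g x + G.avg h x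
        rw [avg, avg, avg, ← (G.aux_summable g x).tsum_add (G.aux_summable h x)]
        exact tsum_congr fun y => by simp [mul_add]
      map_smul' := by
        intro c g
        ext x
        change G.avg (⇑(c • g)) x = c * G.avg g x
        rw [avg, avg, ← tsum_mul_left]
        exact tsum_congr fun y => by simp; ring } 1 (by
    intro g
    rw [one_mul, BoundedContinuousFunction.norm_le (norm_nonneg _)]
    exact G.abs_avg_le g ‖g‖ g.norm_coe_le_norm)

lemma M_apply (g : V →ᵇ ℝ) (x : V) : G.M g x = G.avg g x := rfl

/-- Laplacian as a bounded operator. -/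
noncomputable def L : (V →ᵇ ℝ) →L[ℝ] (V →ᵇ ℝ) := G.M - 1

lemma coe_L (g : V →ᵇ ℝ) : ⇑(G.L g) = G.lap g := by
  funext x
  rw [lap_eq_avg]
  rfl

lemma hasSum_exp_apply (A : (V →ᵇ ℝ) →L[ℝ] (V →ᵇ ℝ)) (s : ℝ) (g : V →ᵇ ℝ) (x : V) :
    HasSum (fun k : ℕ => s ^ k / (Nat.factorial k : ℝ) * ((A ^ k) g) x) (eop A s g x) :=
  hasSum_eop A s g (evalCLM ℝ x)

lemma coe_L_pow (k : ℕ) (g : V →ᵇ ℝ) : ⇑((G.L ^ k) g) = (G.lap)^[k] g := by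
  induction k with
  | zero => rfl
  | succ k ih => rw [pow_succ', Function.iterate_succ_apply', ← ih, ← coe_L]; rfl

lemma heatSem_eq (t : ℝ) (g : V →ᵇ ℝ) :
    G.heatSem t g = ⇑(eop G.L t g) := by
  funext x
  rw [heatSem, ← (hasSum_exp_apply G.L t g x).tsum_eq]
  simp_rw [coe_L_pow]

lemma M_pow_nonneg (k : ℕ) (g : V →ᵇ ℝ) (hg : ∀ x, 0 ≤ g x) (x : V) : 0 ≤ (G.M ^ k) g x := by
  induction k generalizing x with
  | zero => exact hg x
  | succ k ih =>
    rw [pow_succ']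
    exact tsum_nonneg fun y => mul_nonneg (G.p_nonneg x y) (ih y)

lemma exp_L_nonneg (s : ℝ) (hs : 0 ≤ s) (g : V →ᵇ ℝ) (hg : ∀ x, 0 ≤ g x) (x : V) :
    0 ≤ eop G.L s g x := by
  rw [L, eop_sub_one]
  refine mul_nonneg (Real.exp_pos _).le ?_
  refine (hasSum_exp_apply G.M s g x).nonneg fun k => ?_
  exact mul_nonneg (by positivity) (G.M_pow_nonneg k g hg x)

/-- Twice the carre du champ on bounded functions. -/
noncomputable def B (g h : V →ᵇ ℝ) : V →ᵇ ℝ := G.L (g * h) - g * G.L h - h * G.L g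

lemma B_apply (g h : V →ᵇ ℝ) (x : V) : G.B g h x = 2 * G.gammaBil g h x := by
  rw [gammaBil_eq_s17]
  have : ⇑(g * h) = fun y => g y * h y := rfl
  simp only [← this, ← coe_L]
  rfl

lemma coe_half_B (g : V →ᵇ ℝ) : ⇑((1 / 2 : ℝ) • G.B g g) = G.gamma g := by
  funext x
  change (1 / 2 : ℝ) * G.B g g x = _
  rw [B_apply, gamma_eq_bil]; ring

lemma main_bdd (K : ℝ) (hCD : G.CDInfty K) (f : V →ᵇ ℝ) (t : ℝ) (ht : 0 < t) (x : V) :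
    G.gamma (G.heatSem t f) x ≤ Real.exp (-2 * K * t) * G.heatSem t (G.gamma f) x := by
  rw [← coe_half_B, heatSem_eq, heatSem_eq, ← coe_half_B]
  set u : ℝ → (V →ᵇ ℝ) := fun s => eop G.L (t - s) f with hu
  have hu' (s : ℝ) : HasDerivAt u (-(G.L (u s))) s := hasDerivAt_eop_rev G.L t s f
  have hLu (w : ℝ → (V →ᵇ ℝ)) (w' : V →ᵇ ℝ) (s : ℝ) (hw : HasDerivAt w w' s) :
      HasDerivAt (fun r => G.L (w r)) (G.L w') s := G.L.hasFDerivAt.comp_hasDerivAt s hw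
  have hB (s : ℝ) : HasDerivAt (fun r => (1 / 2 : ℝ) • G.B (u r) (u r)) (-(G.B (u s) (G.L (u s)))) s := by
    have h1 := (((hLu _ _ s ((hu' s).mul (hu' s))).sub ((hu' s).mul (hLu _ _ s (hu' s)))).sub
      ((hu' s).mul (hLu _ _ s (hu' s)))).const_smul (1 / 2 : ℝ)
    refine h1.congr_deriv ?_
    have e1 : -(G.L (u s)) * u s + u s * -(G.L (u s)) = (-2 : ℝ) • (u s * G.L (u s)) := by
      ext y; simp; ring
    rw [e1]
    ext y
    simp [B]
    ring
  set ψ : ℝ → ℝ := fun s => Real.exp (-2 * K * s) *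
    (eop G.L s ((1 / 2 : ℝ) • G.B (u s) (u s))) x with hψ
  have hψ' (s : ℝ) : HasDerivAt ψ (Real.exp (-2 * K * s) * eop G.L s
      (G.L ((1 / 2 : ℝ) • G.B (u s) (u s)) - G.B (u s) (G.L (u s))
        - (2 * K) • ((1 / 2 : ℝ) • G.B (u s) (u s))) x) s := by
    have h2 := hasDerivAt_eop_apply G.L s _ _ (hB s) (evalCLM ℝ x)
    have h3 := (((hasDerivAt_id s).const_mul (-2 * K)).exp).mul h2
    refine h3.congr_deriv ?_
    simp only [map_sub, map_neg, map_add, map_smul, evalCLM_apply, smul_eq_mul, id,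
      BoundedContinuousFunction.sub_apply, BoundedContinuousFunction.smul_apply]
    ring
  have hmono : MonotoneOn ψ (Set.Ici 0) := by
    apply monotoneOn_of_deriv_nonneg (convex_Ici 0)
    · exact fun s _ => (hψ' s).continuousAt.continuousWithinAt
    · exact fun s _ => (hψ' s).differentiableAt.differentiableWithinAt
    · intro s hs
      rw [interior_Ici] at hs
      rw [(hψ' s).deriv]
      refine mul_nonneg (Real.exp_pos _).le (G.exp_L_nonneg s (le_of_lt hs) _ ?_ x)
      intro y
      have h := hCD (u s) y
      rw [gamma2, ← coe_half_B, ← coe_L, ← coe_L] at h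
      have h5 := G.B_apply (u s) (G.L (u s)) y
      change 0 ≤ G.L ((1 / 2 : ℝ) • G.B (u s) (u s)) y - G.B (u s) (G.L (u s)) y
        - (2 * K) * (((1 / 2 : ℝ) • G.B (u s) (u s)) y)
      linarith
  have h := hmono (Set.mem_Ici.2 le_rfl) (Set.mem_Ici.2 ht.le) ht.le
  simpa [hψ, hu, eop_zero] using h

end Helpers

end WeightedGraph

/-- On a weighted graph with bounded geometry satisfying `CD(K,∞)`
with `K ≥ 0`, for every bounded `f`, `t > 0` and `x`,
`Γ(P_t f)(x) ≤ e^{-2Kt} P_t(Γf)(x)`. -/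
theorem gamma_heat_semigroup_CDinfty {V : Type*} [Countable V]
    (G : WeightedGraph V) (α K : ℝ) (hbg : G.BoundedGeometry α) (hK : 0 ≤ K)
    (hCD : G.CDInfty K) (f : V → ℝ) (hf : BddAbove (Set.range fun x => |f x|))
    (t : ℝ) (ht : 0 < t) (x : V) :
    G.gamma (G.heatSem t f) x ≤ Real.exp (-2 * K * t) * G.heatSem t (G.gamma f) x := by
  let _ : TopologicalSpace V := ⊥
  have _ : DiscreteTopology V := ⟨rfl⟩
  obtain ⟨C, hC⟩ := hf
  exact G.main_bdd K hCD (BoundedContinuousFunction.ofNormedAddCommGroupDiscrete f C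
    fun y => hC ⟨y, rfl⟩) t ht x
end

section
/- Let G=(V,p,μ) be a weighted graph with bounded geometry satisfying CD(0,n) for some positive integer n. Then for every bounded function f:V→ℝ, every t>0 and every x∈V, Γ(P_t f)(x) ≤ P_t(Γf)(x) − (2t/n)·(P_t(Δf)(x))². -/
namespace HeatAux

open NormedSpace WeightedGraph

/-- Bounded functions on `V` (with the discrete topology). -/
def E (V : Type*) [TopologicalSpace V] : Type _ := BoundedContinuousFunction V ℝ

section Generic

variable {F : Type*} [NormedAddCommGroup F] [NormedSpace ℝ F]

lemma gen_comm (T : F →L[ℝ] F) (t : ℝ) (f : F) :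
    T (exp (t • T) f) = exp (t • T) (T f) := by
  have h : Commute T (t • T) := (Commute.refl _).smul_right t
  exact congrArg (fun S : F →L[ℝ] F => S f) h.exp_right.eq

lemma gen_add [CompleteSpace F] (T : F →L[ℝ] F) (s t : ℝ) (f : F) :
    exp (s • T) (exp (t • T) f) = exp ((s + t) • T) f := by
  let _ : NormedAlgebra ℚ (F →L[ℝ] F) := NormedAlgebra.restrictScalars ℚ ℝ _
  have h : Commute (s • T) (t • T) := ((Commute.refl _).smul_right t).smul_left s
  rw [add_smul, exp_add_of_commute h]
  rfl

lemma gen_zero (T : F →L[ℝ] F) (f : F) : exp ((0 : ℝ) • T) f = f := by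
  rw [zero_smul, exp_zero]; rfl

lemma gen_hasSum [CompleteSpace F] (T : F →L[ℝ] F) (t : ℝ) (f : F) (l : F →L[ℝ] ℝ) :
    HasSum (fun k : ℕ => t ^ k / (Nat.factorial k : ℝ) * l ((T ^ k) f)) (l (exp (t • T) f)) := by
  have h := exp_series_hasSum_exp' (𝕂 := ℝ) (t • T)
  have h2 := h.mapL (l.comp (ContinuousLinearMap.apply ℝ F f))
  convert! h2 using 1
  funext k
  simp only [smul_pow, ContinuousLinearMap.comp_apply, ContinuousLinearMap.apply_apply,
    _root_.smul_apply, map_smul, smul_eq_mul]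
  ring

end Generic

section Einst

variable {V : Type*} [TopologicalSpace V]

noncomputable instance : NormedCommRing (E V) :=
  inferInstanceAs (NormedCommRing (BoundedContinuousFunction V ℝ))

noncomputable instance : NormedAlgebra ℝ (E V) :=
  inferInstanceAs (NormedAlgebra ℝ (BoundedContinuousFunction V ℝ))

instance : CompleteSpace (E V) :=
  inferInstanceAs (CompleteSpace (BoundedContinuousFunction V ℝ))

instance : FunLike (E V) V ℝ :=
  inferInstanceAs (FunLike (BoundedContinuousFunction V ℝ) V ℝ)

@[ext] lemma E.ext {f g : E V} (h : ∀ x, f x = g x) : f = g := DFunLike.ext _ _ h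

@[simp] lemma coe_add (f g : E V) : ⇑(f + g) = ⇑f + ⇑g := rfl
@[simp] lemma coe_sub (f g : E V) : ⇑(f - g) = ⇑f - ⇑g := rfl
@[simp] lemma coe_mul (f g : E V) : ⇑(f * g) = ⇑f * ⇑g := rfl
@[simp] lemma coe_neg (f : E V) : ⇑(-f) = -⇑f := rfl
@[simp] lemma coe_one : ⇑(1 : E V) = 1 := rfl
@[simp] lemma coe_zero : ⇑(0 : E V) = 0 := rfl
@[simp] lemma smul_apply' (c : ℝ) (f : E V) (x : V) : (c • f) x = c * f x := rfl

lemma abs_le_norm (f : E V) (x : V) : |f x| ≤ ‖f‖ :=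
  BoundedContinuousFunction.norm_coe_le_norm f x

/-- Build a bounded function. -/
noncomputable def mk [DiscreteTopology V] (f : V → ℝ) (C : ℝ) (h : ∀ x, |f x| ≤ C) : E V :=
  BoundedContinuousFunction.ofNormedAddCommGroupDiscrete f C h

@[simp] lemma coe_mk [DiscreteTopology V] (f : V → ℝ) (C : ℝ) (h : ∀ x, |f x| ≤ C) :
    ⇑(mk f C h) = f := rfl

/-- Evaluation at a point. -/
noncomputable def ev (x : V) : E V →L[ℝ] ℝ :=
  LinearMap.mkContinuous
    { toFun := fun f => f x
      map_add' := fun _ _ => rfl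
      map_smul' := fun _ _ => rfl } 1 (fun f => by rw [one_mul]; exact abs_le_norm f x)

@[simp] lemma ev_apply (x : V) (f : E V) : ev x f = f x := rfl

end Einst

section

variable {V : Type*} [TopologicalSpace V] [DiscreteTopology V] (G : WeightedGraph V)

lemma p_zero {G : WeightedGraph V} {x y : V} (h : y ∉ (G.locallyFinite x).toFinset) :
    G.p x y = 0 := by
  have h1 : ¬ 0 < G.p x y := by simpa using h
  exact le_antisymm (not_lt.mp h1) (G.p_nonneg x y)

lemma tsum_eq (x : V) (F : V → ℝ) :
    ∑' y, G.p x y * F y = ∑ y ∈ (G.locallyFinite x).toFinset, G.p x y * F y :=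
  tsum_eq_sum fun y hy => by rw [p_zero hy, zero_mul]

lemma sum_p (x : V) : ∑ y ∈ (G.locallyFinite x).toFinset, G.p x y = 1 := by
  rw [← (G.markov x).tsum_eq]
  exact (tsum_eq_sum fun y hy => p_zero hy).symm

lemma abs_avg_le (x : V) (f : V → ℝ) (C : ℝ) (hC : ∀ y, |f y| ≤ C) :
    |∑ y ∈ (G.locallyFinite x).toFinset, G.p x y * f y| ≤ C := by
  calc _ ≤ ∑ y ∈ (G.locallyFinite x).toFinset, |G.p x y * f y| := Finset.abs_sum_le_sum_abs _ _
    _ ≤ ∑ y ∈ (G.locallyFinite x).toFinset, G.p x y * C := by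
        refine Finset.sum_le_sum fun y _ => ?_
        rw [abs_mul, abs_of_nonneg (G.p_nonneg x y)]
        exact mul_le_mul_of_nonneg_left (hC y) (G.p_nonneg x y)
    _ = C := by rw [← Finset.sum_mul, sum_p, one_mul]

/-- The averaging operator. -/
noncomputable def avg : (E V →L[ℝ] E V) :=
  LinearMap.mkContinuous
    { toFun := fun f => mk
        (fun x => ∑ y ∈ (G.locallyFinite x).toFinset, G.p x y * f y) ‖f‖
        (fun x => abs_avg_le G x f ‖f‖ fun y => abs_le_norm f y)
      map_add' := fun f g => by
        ext x
        simp [mul_add, Finset.sum_add_distrib]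
      map_smul' := fun c f => by
        ext x
        simp only [coe_mk, smul_apply', smul_eq_mul, RingHom.id_apply,
          Finset.mul_sum]
        exact Finset.sum_congr rfl fun y _ => by ring } 1
    (fun f => by
      rw [one_mul]
      exact (BoundedContinuousFunction.norm_le (norm_nonneg f)).2
        fun x => abs_avg_le G x f ‖f‖ fun y => abs_le_norm f y)

lemma avg_apply (f : E V) (x : V) :
    avg G f x = ∑ y ∈ (G.locallyFinite x).toFinset, G.p x y * f y := rfl

/-- The Laplacian as a bounded operator. -/
noncomputable def L : (E V →L[ℝ] E V) := avg G - 1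

lemma L_apply (f : E V) (x : V) :
    L G f x = ∑ y ∈ (G.locallyFinite x).toFinset, G.p x y * f y - f x := rfl

lemma lap_eq (f : E V) : G.lap f = L G f := by
  funext x
  rw [lap, tsum_eq G x (fun y => f y - f x), L_apply]
  simp only [mul_sub, Finset.sum_sub_distrib, ← Finset.sum_mul, sum_p, one_mul]

lemma gammaBil_eq (f g : E V) :
    G.gammaBil f g = ((1 / 2 : ℝ) • (L G (f * g) - f * L G g - g * L G f) : E V) := by
  funext x
  simp only [gammaBil, mul_assoc]
  rw [tsum_eq G x (fun y => (f y - f x) * (g y - g x))]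
  simp only [smul_apply', coe_sub, coe_mul, Pi.sub_apply, Pi.mul_apply, L_apply, smul_eq_mul]
  have : ∑ y ∈ (G.locallyFinite x).toFinset, G.p x y * ((f y - f x) * (g y - g x))
    = ∑ y ∈ (G.locallyFinite x).toFinset, (G.p x y * (f y * g y) - f x * (G.p x y * g y)
      - g x * (G.p x y * f y) + G.p x y * (f x * g x)) :=
    Finset.sum_congr rfl fun y _ => by ring
  rw [this]
  simp only [Finset.sum_add_distrib, Finset.sum_sub_distrib, ← Finset.mul_sum, ← Finset.sum_mul,
    sum_p]
  ring

/-- The carré du champ on bounded functions. -/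
noncomputable def Gam (f g : E V) : E V :=
  (1 / 2 : ℝ) • (L G (f * g) - f * L G g - g * L G f)

lemma gamma_eq (f : E V) : G.gamma f = Gam G f f := by
  rw [Gam, ← gammaBil_eq]
  funext x
  simp only [gamma, gammaBil, sq, mul_assoc]

lemma gamma2_eq (f : E V) :
    G.gamma2 f = ((1 / 2 : ℝ) • L G (Gam G f f) - Gam G f (L G f) : E V) := by
  funext x
  rw [gamma2, gamma_eq, lap_eq, lap_eq, gammaBil_eq]
  rfl

lemma lap_iter (f : E V) (k : ℕ) : (G.lap)^[k] f = (L G ^ k) f := by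
  induction k with
  | zero => rfl
  | succ k ih => rw [Function.iterate_succ_apply', ih, lap_eq, pow_succ']; rfl

/-- The heat semigroup on bounded functions. -/
noncomputable def P (t : ℝ) : (E V →L[ℝ] E V) := exp (t • L G)

lemma hasSum_exp_apply (T : (E V →L[ℝ] E V)) (t : ℝ) (f : E V) (x : V) :
    HasSum (fun k : ℕ => t ^ k / (Nat.factorial k : ℝ) * (T ^ k) f x) ((exp (t • T)) f x) := by
  exact gen_hasSum T t f (ev x)

lemma heat_eq (t : ℝ) (f : E V) : G.heatSem t f = P G t f := by
  funext x
  rw [P, heatSem, ← (hasSum_exp_apply (L G) t f x).tsum_eq]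
  simp only [lap_iter]

lemma avg_pow_nonneg (f : E V) (hf : ∀ x, 0 ≤ f x) (k : ℕ) : ∀ x, 0 ≤ (avg G ^ k) f x := by
  induction k with
  | zero => exact hf
  | succ k ih =>
    intro x
    rw [pow_succ']
    change 0 ≤ avg G ((avg G ^ k) f) x
    rw [avg_apply]
    exact Finset.sum_nonneg fun y _ => mul_nonneg (G.p_nonneg x y) (ih y)

lemma P_nonneg (t : ℝ) (ht : 0 ≤ t) (f : E V) (hf : ∀ x, 0 ≤ f x) (x : V) :
    0 ≤ P G t f x := by
  let _ : NormedAlgebra ℚ (E V →L[ℝ] E V) := NormedAlgebra.restrictScalars ℚ ℝ _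
  have e : t • L G = algebraMap ℝ (E V →L[ℝ] E V) (-t) + t • avg G := by
    rw [L, Algebra.algebraMap_eq_smul_one, smul_sub, neg_smul]; abel
  have h1 : P G t f x = Real.exp (-t) * (exp (t • avg G)) f x := by
    rw [P, e, exp_add_of_commute (Algebra.commutes _ _), ← algebraMap_exp_comm,
      Algebra.algebraMap_eq_smul_one, Real.exp_eq_exp_ℝ]
    simp
  rw [h1]
  refine mul_nonneg (Real.exp_pos _).le ?_
  rw [← (hasSum_exp_apply (avg G) t f x).tsum_eq]
  exact tsum_nonneg fun k => mul_nonneg (by positivity) (avg_pow_nonneg G f hf k x)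

lemma P_one (t : ℝ) (x : V) : P G t 1 x = 1 := by
  have hL : L G 1 = 0 := by
    ext x
    rw [L_apply]
    simp [sum_p]
  rw [P, ← (hasSum_exp_apply (L G) t 1 x).tsum_eq, tsum_eq_single 0]
  · simp
  · intro k hk
    obtain ⟨m, rfl⟩ := Nat.exists_eq_succ_of_ne_zero hk
    rw [pow_succ (L G), ContinuousLinearMap.mul_apply, hL]
    simp

lemma P_mono (t : ℝ) (ht : 0 ≤ t) (f g : E V) (h : ∀ x, f x ≤ g x) (x : V) :
    P G t f x ≤ P G t g x := by
  have := P_nonneg G t ht (g - f) (fun y => by simpa using h y) x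
  rw [map_sub] at this
  simpa using this

lemma jensen (t : ℝ) (ht : 0 ≤ t) (g : E V) (x : V) :
    (P G t g x) ^ 2 ≤ P G t (g * g) x := by
  set c := P G t g x with hc
  have h := P_nonneg G t ht (g * g - (2 * c) • g + (c ^ 2) • 1) (fun y => by
    simp only [coe_add, coe_sub, coe_mul, smul_apply', coe_one, Pi.add_apply, Pi.sub_apply,
      Pi.mul_apply, Pi.one_apply, smul_eq_mul]
    nlinarith [sq_nonneg (g y - c)]) x
  simp only [map_add, map_sub, map_smul, coe_add, coe_sub, smul_apply', Pi.add_apply, Pi.sub_apply,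
    smul_eq_mul, P_one, ← hc] at h
  nlinarith

lemma L_comm (t : ℝ) (f : E V) : L G (P G t f) = P G t (L G f) := gen_comm (L G) t f

lemma P_add (s t : ℝ) (f : E V) : P G s (P G t f) = P G (s + t) f := gen_add (L G) s t f

lemma P_zero (f : E V) : P G 0 f = f := gen_zero (L G) f

lemma hasDerivAt_P (s : ℝ) : HasDerivAt (P G) (P G s * L G) s :=
  hasDerivAt_exp_smul_const (L G) s

lemma hasDerivAt_u (t s : ℝ) (f : E V) :
    HasDerivAt (fun s => P G (t - s) f) (- L G (P G (t - s) f)) s := by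
  have h1 : HasDerivAt (fun s : ℝ => t - s) (-1) s := by
    simpa using (hasDerivAt_id s).const_sub t
  have h2 := (hasDerivAt_P G (t - s)).scomp s h1
  have h3 := h2.clm_apply (hasDerivAt_const s f)
  convert! h3 using 1
  rw [L_comm]
  simp

lemma hasDerivAt_Gam (u : ℝ → E V) (s : ℝ) (h : HasDerivAt u (- L G (u s)) s) :
    HasDerivAt (fun s => Gam G (u s) (u s)) (-((2 : ℝ) • Gam G (u s) (L G (u s)))) s := by
  have hL := (L G).hasFDerivAt.comp_hasDerivAt s h
  have hm := (L G).hasFDerivAt.comp_hasDerivAt s (h.mul h)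
  have := ((hm.sub (h.mul hL)).sub (h.mul hL)).const_smul (1 / 2 : ℝ)
  convert! this using 1
  simp only [Gam, map_add, map_neg, neg_mul, mul_neg, mul_comm (L G (u s)) (u s), smul_smul,
    Function.comp]
  ext x
  simp
  ring

theorem main (n : ℕ) (hCD : G.CD 0 n) (f : E V) (t : ℝ) (ht : 0 < t) (x : V) :
    Gam G (P G t f) (P G t f) x ≤
      P G t (Gam G f f) x - (2 * t / (n : ℝ)) * (P G t (L G f) x) ^ 2 := by
  set u : ℝ → E V := fun s => P G (t - s) f with hu
  set φ : ℝ → ℝ := fun s => P G s (Gam G (u s) (u s)) x with hφ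
  have hd : ∀ s, HasDerivAt φ (P G s ((2 : ℝ) • ((1 / 2 : ℝ) • L G (Gam G (u s) (u s))
      - Gam G (u s) (L G (u s)))) x) s := by
    intro s
    have h1 := (hasDerivAt_P G s).clm_apply (hasDerivAt_Gam G u s (hasDerivAt_u G t s f))
    have h2 := (ev x).hasFDerivAt.comp_hasDerivAt s h1
    convert! h2 using 1
    simp [smul_sub, map_sub]
    ring
  have hb : ∀ s ∈ Set.Icc 0 t, (2 / (n : ℝ)) * (P G t (L G f) x) ^ 2 ≤
      P G s ((2 : ℝ) • ((1 / 2 : ℝ) • L G (Gam G (u s) (u s)) - Gam G (u s) (L G (u s)))) x := by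
    intro s hs
    have h1 : P G s (L G (u s)) = P G t (L G f) := by
      rw [hu]
      simp only [L_comm, P_add, add_sub_cancel]
    have h2 := P_mono G s hs.1 ((2 / (n : ℝ)) • (L G (u s) * L G (u s)))
      ((2 : ℝ) • ((1 / 2 : ℝ) • L G (Gam G (u s) (u s)) - Gam G (u s) (L G (u s)))) (fun y => by
        have h := hCD (u s) y
        rw [gamma2_eq, lap_eq, zero_mul, add_zero] at h
        rw [smul_apply', smul_apply']
        simp only [smul_eq_mul, coe_mul, Pi.mul_apply]
        calc _ = 2 * (1 / (n : ℝ) * L G (u s) y ^ 2) := by ring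
          _ ≤ _ := by linarith) x
    refine le_trans ?_ h2
    rw [map_smul, smul_apply', ← h1]
    exact mul_le_mul_of_nonneg_left (jensen G s hs.1 _ x) (by positivity)
  have hmv := (convex_Icc (0 : ℝ) t).mul_sub_le_image_sub_of_le_deriv
    (f := φ) (fun s _ => (hd s).continuousAt.continuousWithinAt)
    (fun s _ => (hd s).differentiableAt.differentiableWithinAt)
    (C := (2 / (n : ℝ)) * (P G t (L G f) x) ^ 2)
    (fun s hs => by rw [(hd s).deriv]; exact hb s (interior_subset hs))
    0 (Set.left_mem_Icc.2 ht.le) t (Set.right_mem_Icc.2 ht.le) ht.le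
  simp only [hφ, hu, sub_self, sub_zero, P_zero] at hmv
  have : 2 * t / (n : ℝ) * (P G t (L G f) x) ^ 2 = 2 / (n : ℝ) * (P G t (L G f) x) ^ 2 * t := by
    ring
  linarith

end

end HeatAux

/-- On a weighted graph with bounded geometry satisfying `CD(0,n)`,
for every bounded `f`, `t > 0` and `x`,
`Γ(P_t f)(x) ≤ P_t(Γf)(x) - (2t/n) (P_t(Δf)(x))²`. -/
theorem gamma_heat_semigroup_CD_zero_n {V : Type*} [Countable V]
    (G : WeightedGraph V) (α : ℝ) (n : ℕ) (hn : 0 < n)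
    (hbg : G.BoundedGeometry α) (hCD : G.CD 0 n)
    (f : V → ℝ) (hf : BddAbove (Set.range fun x => |f x|))
    (t : ℝ) (ht : 0 < t) (x : V) :
    G.gamma (G.heatSem t f) x ≤
      G.heatSem t (G.gamma f) x - (2 * t / (n : ℝ)) * (G.heatSem t (G.lap f) x) ^ 2 := by
  let _ : TopologicalSpace V := ⊥
  have : DiscreteTopology V := ⟨rfl⟩
  obtain ⟨C, hC⟩ := hf
  have key := HeatAux.main G n hCD (HeatAux.mk f C (fun y => hC ⟨y, rfl⟩)) t ht x
  rw [← HeatAux.gamma_eq, ← HeatAux.heat_eq, ← HeatAux.heat_eq, ← HeatAux.heat_eq,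
    ← HeatAux.gamma_eq, ← HeatAux.lap_eq] at key
  exact key
end
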